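/- arXiv:1906.01898 — 7 statements merged into one kernel-verified Lean document; each statement's English description precedes it below -/
import Mathlib

section
/- Let Ω be a compact metric space and T : Ω → Ω a homeomorphism such that (Ω,T) is minimal (every T-orbit is dense in Ω). Let f_n : Ω → ℝ, n ∈ ℕ, be continuous functions satisfying f_{n+m}(ω) ≤ f_n(ω) + f_m(T^n ω) for all ω ∈ Ω and all n,m ∈ ℕ. If for every ω ∈ Ω the limit φ(ω) := lim_{n→∞} f_n(ω)/n exists, then φ is constant on Ω and the convergence f_n/n → φ is uniform on Ω. -/
open Filter Topology MeasureTheory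

noncomputable section

abbrev SL2 := Matrix.SpecialLinearGroup (Fin 2) ℝ

/-- Operator norm of a 2×2 real matrix acting on Euclidean ℝ². -/
def matNorm (M : Matrix (Fin 2) (Fin 2) ℝ) : ℝ :=
  ‖LinearMap.toContinuousLinearMap (Matrix.toEuclideanLin M)‖

/-- Norm of an element of SL(2,ℝ). -/
def slNorm (M : SL2) : ℝ := matNorm (M : Matrix (Fin 2) (Fin 2) ℝ)

/-- Action of an SL(2,ℝ) matrix on a euclidean vector. -/
def slAct (M : SL2) (v : EuclideanSpace ℝ (Fin 2)) : EuclideanSpace ℝ (Fin 2) :=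
  Matrix.toEuclideanLin (M : Matrix (Fin 2) (Fin 2) ℝ) v

variable {𝒜 : Type*}

/-- The shift by `k` on two-sided sequences; `shift 1` is the left shift `T`. -/
def shift (k : ℤ) (ω : ℤ → 𝒜) : ℤ → 𝒜 := fun n => ω (n + k)

/-- `Ω ⊆ 𝒜^ℤ` is a subshift: nonempty, closed, invariant under the shift and its inverse. -/
structure IsSubshift [TopologicalSpace 𝒜] (Ω : Set (ℤ → 𝒜)) : Prop where
  nonempty : Ω.Nonempty
  closed : IsClosed Ω
  shift_mem : ∀ ω ∈ Ω, shift 1 ω ∈ Ω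
  shift_neg_mem : ∀ ω ∈ Ω, shift (-1) ω ∈ Ω

/-- The word `ω(k) ω(k+1) ⋯ ω(k+n-1)`. -/
def word (ω : ℤ → 𝒜) (k : ℤ) (n : ℕ) : List 𝒜 := (List.range n).map fun i => ω (k + i)

/-- `v` occurs in `ω` at position `k`. -/
def occursAt (v : List 𝒜) (ω : ℤ → 𝒜) (k : ℤ) : Prop := v = word ω k v.length

/-- The words of length `n` occurring in elements of `Ω`. -/
def WordsN (Ω : Set (ℤ → 𝒜)) (n : ℕ) : Set (List 𝒜) :=
  {v | ∃ ω ∈ Ω, ∃ k : ℤ, v = word ω k n}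

/-- The (nonempty) finite words occurring in elements of `Ω`. -/
def Words (Ω : Set (ℤ → 𝒜)) : Set (List 𝒜) :=
  {v | 1 ≤ v.length ∧ v ∈ WordsN Ω v.length}

/-- `A` is locally constant on `Ω`: its value depends only on a finite window around 0. -/
def LocConstOn (Ω : Set (ℤ → 𝒜)) {β : Type*} (A : (ℤ → 𝒜) → β) : Prop :=
  ∃ N : ℕ, ∀ ω ∈ Ω, ∀ ρ ∈ Ω, (∀ i : ℤ, |i| ≤ (N : ℤ) → ω i = ρ i) → A ω = A ρ

/-- The positive part of the cocycle: `cocycleP A n ω = A(T^{n-1}ω) ⋯ A(ω)`. -/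
def cocycleP (A : (ℤ → 𝒜) → SL2) : ℕ → (ℤ → 𝒜) → SL2
  | 0, _ => 1
  | n + 1, ω => A (shift n ω) * cocycleP A n ω

/-- The full cocycle over the shift, `n ∈ ℤ`. -/
def cocycle (A : (ℤ → 𝒜) → SL2) (n : ℤ) (ω : ℤ → 𝒜) : SL2 :=
  if 0 ≤ n then cocycleP A n.toNat ω else (cocycleP A (-n).toNat (shift n ω))⁻¹

/-- `A` is uniform on `Ω`: `(1/n) log‖A(n,ω)‖` converges uniformly on `Ω`. -/
def IsUniform (Ω : Set (ℤ → 𝒜)) (A : (ℤ → 𝒜) → SL2) : Prop :=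
  ∃ Λ : ℝ, TendstoUniformlyOn
    (fun (n : ℕ) (ω : ℤ → 𝒜) => Real.log (slNorm (cocycle A n ω)) / n)
    (fun _ => Λ) atTop Ω

/-- The number of occurrences of `v` in `ω(1)⋯ω(n)`. -/
def occCount (v : List 𝒜) (ω : ℤ → 𝒜) (n : ℕ) : ℕ :=
  Set.ncard {k : ℤ | 1 ≤ k ∧ k + v.length ≤ (n : ℤ) + 1 ∧ occursAt v ω k}

/-- Uniform existence of word frequencies (unique ergodicity). -/
def UniformWordFreq (Ω : Set (ℤ → 𝒜)) : Prop :=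
  ∀ v ∈ Words Ω, ∃ ν : ℝ, TendstoUniformlyOn
    (fun (n : ℕ) (ω : ℤ → 𝒜) => (occCount v ω n : ℝ) / n) (fun _ => ν) atTop Ω

/-- Minimality: every orbit is dense in `Ω`. -/
def IsMinimalSubshift [TopologicalSpace 𝒜] (Ω : Set (ℤ → 𝒜)) : Prop :=
  ∀ ω ∈ Ω, ∀ ρ ∈ Ω, ρ ∈ closure {σ : ℤ → 𝒜 | ∃ k : ℤ, σ = shift k ω}

/-- Condition (α): for all large `n`, the words of length `n` of `Ω` are exactly the
words `lead j (-k+1) ⋯ lead j (-k+n)`, `0 ≤ k ≤ n`, of the leading words. -/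
def CondAlpha (Ω : Set (ℤ → 𝒜)) {r : ℕ} (lead : Fin r → (ℤ → 𝒜)) : Prop :=
  (∀ j, lead j ∈ Ω) ∧ ∃ N : ℕ, ∀ n : ℕ, N ≤ n →
    WordsN Ω n = {v | ∃ j : Fin r, ∃ k : ℕ, k ≤ n ∧ v = word (lead j) (1 - (k : ℤ)) n}

/-- Condition (β): for every locally constant cocycle the Lyapunov limits along the
leading words exist in both time directions and all have the same value. -/
def CondBeta (Ω : Set (ℤ → 𝒜)) {r : ℕ} (lead : Fin r → (ℤ → 𝒜)) : Prop :=
  ∀ A : (ℤ → 𝒜) → SL2, LocConstOn Ω A → ∃ Λ : ℝ, ∀ j : Fin r,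
    Tendsto (fun n : ℕ => Real.log (slNorm (cocycle A n (lead j))) / n) atTop (𝓝 Λ) ∧
    Tendsto (fun n : ℕ => Real.log (slNorm (cocycle A (-(n : ℤ)) (lead j))) / n) atTop (𝓝 Λ)

/-- Condition (γ): along the leading words, for every locally constant cocycle and every
nonzero vector, at most one of the two one-sided exponents is negative. -/
def CondGamma (Ω : Set (ℤ → 𝒜)) {r : ℕ} (lead : Fin r → (ℤ → 𝒜)) : Prop :=
  ∀ A : (ℤ → 𝒜) → SL2, LocConstOn Ω A → ∀ j : Fin r,
    ∀ v : EuclideanSpace ℝ (Fin 2), v ≠ 0 →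
    ¬ (limsup (fun n : ℕ => Real.log ‖slAct (cocycle A n (lead j)) v‖ / n) atTop < 0 ∧
       limsup (fun n : ℕ => Real.log ‖slAct (cocycle A (-(n : ℤ)) (lead j)) v‖ / n) atTop < 0)

/-- The leading sequence condition (LSC). -/
def SatisfiesLSC (Ω : Set (ℤ → 𝒜)) : Prop :=
  ∃ (r : ℕ) (lead : Fin r → (ℤ → 𝒜)), CondAlpha Ω lead ∧ CondBeta Ω lead ∧ CondGamma Ω lead

/-- `F` is subadditive on the words of `Ω`. -/
def SubadditiveOn (Ω : Set (ℤ → 𝒜)) (F : List 𝒜 → ℝ) : Prop :=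
  ∀ x y : List 𝒜, x ∈ Words Ω → y ∈ Words Ω → (x ++ y) ∈ Words Ω → F (x ++ y) ≤ F x + F y

/-- `Fb` is the asymptotic mean `lim_n max { F x / n : x ∈ W(Ω)_n }` of `F`. -/
def IsAsympMean (Ω : Set (ℤ → 𝒜)) (F : List 𝒜 → ℝ) (Fb : ℝ) : Prop :=
  Tendsto (fun n : ℕ => sSup ((fun x => F x / n) '' WordsN Ω n)) atTop (𝓝 Fb)

/-- Maximal number of pairwise disjoint occurrences of `v` in `ω(1)⋯ω(n)`. -/
def disjCount (v : List 𝒜) (ω : ℤ → 𝒜) (n : ℕ) : ℕ :=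
  sSup {m : ℕ | ∃ S : Finset ℤ, S.card = m ∧
    (∀ k ∈ S, 1 ≤ k ∧ k + v.length ≤ (n : ℤ) + 1 ∧ occursAt v ω k) ∧
    (∀ k ∈ S, ∀ l ∈ S, k ≠ l → (v.length : ℤ) ≤ |k - l|)}

/-- Condition (PQ) for the one-sided word `p(1)p(2)⋯`. -/
def CondPQ (p : ℤ → 𝒜) : Prop :=
  ∃ c : ℝ, 0 < c ∧ ∀ m : ℕ, 1 ≤ m →
    c ≤ liminf (fun n : ℕ => (m : ℝ) / n * disjCount (word p 1 m) p n) atTop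

/-- ℓ²(ℤ) over the reals. -/
abbrev Ell2Z : Type := lp (fun _ : ℤ => ℝ) 2

/-- `H` acts as the Jacobi operator with coefficients `f, g` at `ω`. -/
def IsJacobiAt (f g : (ℤ → 𝒜) → ℝ) (ω : ℤ → 𝒜) (H : Ell2Z →L[ℝ] Ell2Z) : Prop :=
  ∀ u : Ell2Z, ∀ n : ℤ,
    (H u : ∀ _ : ℤ, ℝ) n =
      f (shift n ω) * (u : ∀ _ : ℤ, ℝ) (n - 1) + f (shift (n + 1) ω) * (u : ∀ _ : ℤ, ℝ) (n + 1)
        + g (shift n ω) * (u : ∀ _ : ℤ, ℝ) n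

/-- The pair `(f,g)` is periodic on `Ω`. -/
def PeriodicPair (Ω : Set (ℤ → 𝒜)) (f g : (ℤ → 𝒜) → ℝ) : Prop :=
  ∃ P : ℕ, 1 ≤ P ∧ ∀ ω ∈ Ω, f (shift (P : ℤ) ω) = f ω ∧ g (shift (P : ℤ) ω) = g ω

/-- `S ⊆ ℝ` is a Cantor set of Lebesgue measure zero: compact, empty interior,
no isolated points, Lebesgue measure zero. -/
def IsMeasureZeroCantor (S : Set ℝ) : Prop :=
  IsCompact S ∧ interior S = ∅ ∧ Perfect S ∧ volume S = 0

/-- `n` copies of `x` separated by `n-1` copies of the letter `l`. -/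
def sepJoin (x : List 𝒜) (l : 𝒜) (m : ℕ) : List 𝒜 :=
  (List.replicate (m - 1) (x ++ [l])).flatten ++ x

/-- `Blk a nseq (k+1)` is the block `block(k)` of the simple Toeplitz construction
(with `Blk a nseq 0 = block(-1) = ε`). -/
def Blk (a : ℕ → 𝒜) (nseq : ℕ → ℕ) : ℕ → List 𝒜
  | 0 => []
  | k + 1 => sepJoin (Blk a nseq k) (a k) (nseq k)

/-- `p(1)p(2)⋯` is the one-sided word `block(∞)`: every block is a prefix of it. -/
def IsBlockInf (a : ℕ → 𝒜) (nseq : ℕ → ℕ) (p : ℤ → 𝒜) : Prop :=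
  ∀ k : ℕ, word p 1 (Blk a nseq k).length = Blk a nseq k

/-- The simple Toeplitz subshift generated by `block(∞) = p(1)p(2)⋯`: all two-sided
sequences whose finite subwords all occur in `block(∞)`. -/
def toeplitzΩ (p : ℤ → 𝒜) : Set (ℤ → 𝒜) :=
  {ω | ∀ (i : ℤ) (n : ℕ), ∃ l : ℤ, 1 ≤ l ∧ word ω i n = word p l n}

/-- The eventual alphabet: letters occurring infinitely often in `(a_k)`. -/
def EvAlph (a : ℕ → 𝒜) : Set 𝒜 := {x | ∀ K : ℕ, ∃ k, K ≤ k ∧ a k = x}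

/-- The leading word `p^R v | p`: equals `p(n+1)` for `n ≥ 0`, carries the word `v` on
positions `-|v|, …, -1`, and equals `p(-(n+|v|))` for `n < -|v|`. -/
def leadWordGen (p : ℤ → 𝒜) (v : List 𝒜) : ℤ → 𝒜 := fun n =>
  if 0 ≤ n then p (n + 1)
  else if -(v.length : ℤ) ≤ n then v.getD (n + v.length).toNat (p 1)
  else p (-(n + v.length))

/-- The Gauss map. -/
def gaussMap (x : ℝ) : ℝ := 1 / x - ⌊1 / x⌋

/-- `cfSeq α n` is the continued fraction coefficient `a_{n+1}` of `α`. -/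
def cfSeq (α : ℝ) (n : ℕ) : ℕ := ⌊1 / (gaussMap^[n] α)⌋₊

/-- The standard Sturmian words: `sturmW α (n+1) = s_n`, `sturmW α 0 = s_{-1} = 1`,
`sturmW α 1 = s_0 = 0`, `s_1 = s_0^{a_1 - 1} s_{-1}`, `s_n = s_{n-1}^{a_n} s_{n-2}`. -/
def sturmW (α : ℝ) : ℕ → List (Fin 2)
  | 0 => [1]
  | 1 => [0]
  | 2 => List.replicate (cfSeq α 0 - 1) (0 : Fin 2) ++ [1]
  | n + 3 => (List.replicate (cfSeq α (n + 1)) (sturmW α (n + 2))).flatten ++ sturmW α (n + 1)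

/-- The Sturmian subshift with rotation number `α`: all two-sided sequences whose finite
subwords occur in some `s_n`. -/
def sturmΩ (α : ℝ) : Set (ℤ → Fin 2) :=
  {ω | ∀ (i : ℤ) (n : ℕ), ∃ m : ℕ, word ω i n <:+: sturmW α m}

/-- The positive cocycle of a map `A` over a transformation `T`:
`cocycleH T A n ω = A(T^{n-1}ω) ⋯ A(ω)`. -/
def cocycleH {Ω : Type*} (T : Ω → Ω) (A : Ω → SL2) : ℕ → Ω → SL2
  | 0, _ => 1
  | n + 1, ω => A (T^[n] ω) * cocycleH T A n ω

end
theorem aux_cover {Ω : Type*} [MetricSpace Ω] [CompactSpace Ω] (T : Ω ≃ₜ Ω)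
    (hmin : ∀ ω ρ : Ω, ρ ∈ closure (Set.range fun n : ℤ => (T.toEquiv ^ n) ω))
    (U : Set Ω) (hU : IsOpen U) (hne : U.Nonempty) :
    ∃ N : ℕ, ∀ ω : Ω, (∃ j ≤ N, (⇑T)^[j] ω ∈ U) ∧ (∃ j ≤ N, ∃ σ ∈ U, (⇑T)^[j] σ = ω) := by
  have hpow : ∀ (j : ℕ) (ω : Ω), (T.toEquiv ^ (j : ℤ)) ω = (⇑T)^[j] ω := by
    intro j ω
    rw [zpow_natCast, Equiv.Perm.coe_pow]
    rfl
  have hc : ∀ n : ℤ, Continuous fun ω => (T.toEquiv ^ n) ω := by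
    intro n
    have hn : ∀ j : ℕ, Continuous fun ω => (T.toEquiv ^ (j : ℤ)) ω := by
      intro j
      simp only [hpow]
      exact T.continuous.iterate j
    have hn' : ∀ j : ℕ, Continuous fun ω => (T.toEquiv ^ (-(j : ℤ))) ω := by
      intro j
      have h : ∀ ω, (T.toEquiv ^ (-(j : ℤ))) ω = (⇑T.symm)^[j] ω := by
        intro ω
        rw [zpow_neg, ← inv_zpow, zpow_natCast, Equiv.Perm.coe_pow]
        rfl
      simp only [h]
      exact T.symm.continuous.iterate j
    rcases n.eq_nat_or_neg with ⟨j, rfl | rfl⟩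
    · exact hn j
    · exact hn' j
  obtain ⟨t, ht⟩ := isCompact_univ.elim_finite_subcover
    (fun n : ℤ => (fun ω => (T.toEquiv ^ n) ω) ⁻¹' U) (fun n => hU.preimage (hc n)) (by
      intro ω _
      obtain ⟨u, hu⟩ := hne
      obtain ⟨x, hx, n, rfl⟩ := mem_closure_iff.1 (hmin ω u) U hU hu
      exact Set.mem_iUnion.2 ⟨n, hx⟩)
  set K : ℕ := ∑ n ∈ t, n.natAbs with hK
  have hK' : ∀ n ∈ t, n.natAbs ≤ K := fun n hn =>
    Finset.single_le_sum (f := fun n : ℤ => n.natAbs) (fun _ _ => Nat.zero_le _) hn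
  have key : ∀ ω : Ω, ∃ n : ℤ, n.natAbs ≤ K ∧ (T.toEquiv ^ n) ω ∈ U := by
    intro ω
    have := ht (Set.mem_univ ω)
    simp only [Set.mem_iUnion] at this
    obtain ⟨n, hn, h⟩ := this
    exact ⟨n, hK' n hn, h⟩
  refine ⟨2 * K, fun ω => ⟨?_, ?_⟩⟩
  · obtain ⟨n, hn, h⟩ := key ((T.toEquiv ^ (K : ℤ)) ω)
    refine ⟨(n + K).toNat, by omega, ?_⟩
    rw [← hpow, Int.toNat_of_nonneg (by omega), zpow_add]
    exact h
  · obtain ⟨n, hn, h⟩ := key ((T.toEquiv ^ (-(K : ℤ))) ω)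
    refine ⟨(K - n).toNat, by omega, _, h, ?_⟩
    rw [← hpow, Int.toNat_of_nonneg (by omega), ← Equiv.Perm.mul_apply, ← Equiv.Perm.mul_apply,
      ← zpow_add, ← zpow_add]
    simp

theorem aux_mono {Ω : Type*} [MetricSpace Ω] (T : Ω ≃ₜ Ω)
    (f : ℕ → Ω → ℝ)
    (hsub : ∀ (ω : Ω) (n m : ℕ), f (n + m) ω ≤ f n ω + f m ((⇑T)^[n] ω))
    (φ : Ω → ℝ) (hφ : ∀ ω : Ω, Filter.Tendsto (fun n : ℕ => f n ω / n) Filter.atTop (nhds (φ ω)))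
    (ω : Ω) (j : ℕ) : φ ω ≤ φ ((⇑T)^[j] ω) := by
  have h1 : Filter.Tendsto (fun n : ℕ => f (n + j) ω / ((n + j : ℕ) : ℝ)) Filter.atTop
    (nhds (φ ω)) := (Filter.tendsto_add_atTop_iff_nat j).2 (hφ ω)
  have h2 : Filter.Tendsto (fun n : ℕ => (((n + j : ℕ) : ℝ)) / n) Filter.atTop (nhds 1) := by
    have h : Filter.Tendsto (fun n : ℕ => 1 + (j : ℝ) / n) Filter.atTop (nhds (1 + 0)) :=
      tendsto_const_nhds.add (tendsto_const_div_atTop_nhds_zero_nat (j : ℝ))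
    rw [add_zero] at h
    refine h.congr' ?_
    filter_upwards [Filter.eventually_gt_atTop 0] with n hn
    have : (n : ℝ) ≠ 0 := by positivity
    push_cast
    field_simp
  have h3 := h1.mul h2
  rw [mul_one] at h3
  have h4 : Filter.Tendsto (fun n : ℕ => f j ω / n + f n ((⇑T)^[j] ω) / n) Filter.atTop
      (nhds (0 + φ ((⇑T)^[j] ω))) :=
    (tendsto_const_div_atTop_nhds_zero_nat (f j ω)).add (hφ _)
  rw [zero_add] at h4
  refine le_of_tendsto_of_tendsto h3 h4 ?_
  filter_upwards [Filter.eventually_gt_atTop 0] with n hn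
  have hn' : (0 : ℝ) < n := by positivity
  have hnj : (0 : ℝ) < ((n + j : ℕ) : ℝ) := by positivity
  rw [div_mul_div_cancel₀ hnj.ne', ← add_div]
  have := hsub ω j n
  rw [add_comm j n] at this
  gcongr

theorem aux_baire {Ω : Type*} [MetricSpace Ω] [CompactSpace Ω] [Nonempty Ω]
    (f : ℕ → Ω → ℝ) (hf : ∀ n, Continuous (f n))
    (φ : Ω → ℝ) (hφ : ∀ ω : Ω, Filter.Tendsto (fun n : ℕ => f n ω / n) Filter.atTop (nhds (φ ω)))
    (ε : ℝ) (hε : 0 < ε) :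
    ∃ (U : Set Ω) (M : ℕ), IsOpen U ∧ U.Nonempty ∧ (∀ ω ∈ U, ∀ m ≥ M, |f m ω / m - φ ω| ≤ ε) ∧
      ∀ ω ∈ U, ∀ ρ ∈ U, φ ω ≤ φ ρ + 4 * ε := by
  let A : ℕ → Set Ω := fun M => {ω | ∀ m ≥ M, ∀ n ≥ M, |f m ω / m - f n ω / n| ≤ ε}
  have hA : ∀ M, IsClosed (A M) := by
    intro M
    simp only [A, Set.setOf_forall]
    refine isClosed_iInter fun m => isClosed_iInter fun _ => isClosed_iInter fun n =>
      isClosed_iInter fun _ => ?_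
    exact isClosed_le ((((hf m).div_const _).sub ((hf n).div_const _)).abs) continuous_const
  have hcov : ⋃ M, A M = Set.univ := by
    refine Set.eq_univ_of_forall fun ω => Set.mem_iUnion.2 ?_
    obtain ⟨M, hM⟩ := Metric.cauchySeq_iff.1 (hφ ω).cauchySeq ε hε
    exact ⟨M, fun m hm n hn => (hM m hm n hn).le⟩
  obtain ⟨M, u, hu⟩ := nonempty_interior_of_iUnion_of_closed hA hcov
  have hlim : ∀ ω ∈ A M, ∀ m ≥ M, |f m ω / m - φ ω| ≤ ε := by
    intro ω hω m hm
    refine le_of_tendsto ((tendsto_const_nhds.sub (hφ ω)).abs) ?_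
    filter_upwards [Filter.eventually_ge_atTop M] with n hn
    exact hω m hm n hn
  have hg : Continuous fun ω => f M ω / M := (hf M).div_const _
  refine ⟨interior (A M) ∩ (fun ω => f M ω / M) ⁻¹' Metric.ball (f M u / M) ε, M,
    isOpen_interior.inter (Metric.isOpen_ball.preimage hg), ⟨u, hu, Metric.mem_ball_self hε⟩,
    fun ω hω => hlim ω (interior_subset hω.1), ?_⟩
  intro ω hω ρ hρ
  have a1 := abs_le.1 (hlim ω (interior_subset hω.1) M le_rfl)
  have a2 := abs_le.1 (hlim ρ (interior_subset hρ.1) M le_rfl)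
  have a3 := abs_lt.1 (show |f M ω / M - f M u / M| < ε from hω.2)
  have a4 := abs_lt.1 (show |f M ρ / M - f M u / M| < ε from hρ.2)
  linarith [a1.1, a1.2, a2.1, a2.2, a3.1, a3.2, a4.1, a4.2]

theorem aux_bdd {Ω : Type*} [MetricSpace Ω] [CompactSpace Ω]
    (f : ℕ → Ω → ℝ) (hf : ∀ n, Continuous (f n)) (N : ℕ) :
    ∃ B : ℝ, 0 ≤ B ∧ ∀ j ≤ N, ∀ ω, |f j ω| ≤ B := by
  have h : ∀ j, ∃ C : ℝ, 0 ≤ C ∧ ∀ ω, |f j ω| ≤ C := by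
    intro j
    obtain ⟨C, hC⟩ := isCompact_univ.exists_bound_of_continuousOn (hf j).continuousOn
    exact ⟨max C 0, le_max_right _ _, fun ω => (hC ω (Set.mem_univ ω)).trans (le_max_left _ _)⟩
  choose C hC0 hC using h
  refine ⟨∑ j ∈ Finset.range (N + 1), C j, Finset.sum_nonneg fun j _ => hC0 j, ?_⟩
  intro j hj ω
  exact (hC j ω).trans (Finset.single_le_sum (f := C) (fun j _ => hC0 j)
    (Finset.mem_range.2 (by omega)))

/-- On a compact metric minimal system, pointwise convergence of a
continuous subadditive sequence `f n / n` forces the limit to be constant and the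
convergence to be uniform. -/
theorem statement0 {Ω : Type*} [MetricSpace Ω] [CompactSpace Ω] (T : Ω ≃ₜ Ω)
    (hmin : ∀ ω ρ : Ω, ρ ∈ closure (Set.range fun n : ℤ => (T.toEquiv ^ n) ω))
    (f : ℕ → Ω → ℝ) (hf : ∀ n, Continuous (f n))
    (hsub : ∀ (ω : Ω) (n m : ℕ), f (n + m) ω ≤ f n ω + f m ((⇑T)^[n] ω))
    (φ : Ω → ℝ) (hφ : ∀ ω : Ω, Filter.Tendsto (fun n : ℕ => f n ω / n) Filter.atTop (nhds (φ ω))) :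
    (∀ ω ρ : Ω, φ ω = φ ρ) ∧
      TendstoUniformly (fun (n : ℕ) (ω : Ω) => f n ω / n) φ Filter.atTop := by
  classical
  rcases isEmpty_or_nonempty Ω with hE | hE
  · refine ⟨fun ω => isEmptyElim ω, ?_⟩
    rw [Metric.tendstoUniformly_iff]
    exact fun ε _ => Filter.Eventually.of_forall fun n ω => isEmptyElim ω
  have hconst : ∀ ω ρ : Ω, φ ω ≤ φ ρ := by
    intro ω ρ
    refine le_of_forall_pos_le_add fun ε hε => ?_
    obtain ⟨U, M, hU, hne, -, hosc⟩ := aux_baire f hf φ hφ (ε / 4) (by positivity)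
    obtain ⟨N, hN⟩ := aux_cover T hmin U hU hne
    obtain ⟨j, -, hj⟩ := (hN ω).1
    obtain ⟨k, -, σ, hσ, hk⟩ := (hN ρ).2
    have h1 := aux_mono T f hsub φ hφ ω j
    have h2 := aux_mono T f hsub φ hφ σ k
    rw [hk] at h2
    linarith [hosc _ hj _ hσ]
  refine ⟨fun ω ρ => le_antisymm (hconst ω ρ) (hconst ρ ω), ?_⟩
  obtain ⟨ω₀⟩ := hE
  set c := φ ω₀ with hc
  have hφc : ∀ ω, φ ω = c := fun ω => le_antisymm (hconst _ _) (hconst _ _)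
  haveI : Nonempty Ω := ⟨ω₀⟩
  rw [Metric.tendstoUniformly_iff]
  intro δ hδ
  obtain ⟨ε, hε, hεδ⟩ : ∃ ε : ℝ, 0 < ε ∧ 2 * ε < δ := ⟨δ / 4, by positivity, by linarith⟩
  obtain ⟨U, M, hU, hne, hM, -⟩ := aux_baire f hf φ hφ ε hε
  obtain ⟨N, hN⟩ := aux_cover T hmin U hU hne
  obtain ⟨B, hB0, hB⟩ := aux_bdd f hf N
  have hM' : ∀ ω ∈ U, ∀ m ≥ M + 1, m * (c - ε) ≤ f m ω ∧ f m ω ≤ m * (c + ε) := by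
    intro ω hω m hm
    have h := abs_le.1 (hM ω hω m (by omega))
    rw [hφc] at h
    have hm0 : (0 : ℝ) < m := by exact_mod_cast (by omega : 0 < m)
    constructor
    · have := (le_div_iff₀ hm0).1 (show c - ε ≤ f m ω / m by linarith [h.1])
      linarith
    · have := (div_le_iff₀ hm0).1 (show f m ω / m ≤ c + ε by linarith [h.2])
      linarith
  obtain ⟨L, hL⟩ := exists_nat_gt ((B + N * |c| + N * ε) / ε)
  filter_upwards [Filter.eventually_ge_atTop (M + 1 + N + L)] with n hn ω
  have hn0 : (0 : ℝ) < n := by exact_mod_cast (by omega : 0 < n)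
  have hLn : (L : ℝ) ≤ n := by exact_mod_cast (by omega : L ≤ n)
  have hnε : B + N * |c| + N * ε ≤ n * ε := by
    have := (div_lt_iff₀ hε).1 hL
    nlinarith
  have hup : f n ω ≤ n * (c + 2 * ε) := by
    obtain ⟨j, hj, hju⟩ := (hN ω).1
    have h1 := hsub ω j (n - j)
    rw [Nat.add_sub_cancel' (by omega)] at h1
    have h2 := (hM' _ hju (n - j) (by omega)).2
    rw [Nat.cast_sub (by omega)] at h2
    have h3 := (abs_le.1 (hB j hj ω)).2
    have hjN : (j : ℝ) ≤ N := by exact_mod_cast hj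
    have hj0 : (0 : ℝ) ≤ j := by positivity
    have h4 : -(j * c) ≤ N * |c| := by
      have : (j : ℝ) * |c| ≤ N * |c| := by gcongr
      nlinarith [neg_abs_le c]
    nlinarith
  have hlo : n * (c - 2 * ε) ≤ f n ω := by
    obtain ⟨j, hj, σ, hσ, hk⟩ := (hN ω).2
    have h1 := hsub σ j n
    rw [hk] at h1
    have h2 := (hM' _ hσ (j + n) (by omega)).1
    push_cast at h2
    have h3 := (abs_le.1 (hB j hj σ)).2
    have hjN : (j : ℝ) ≤ N := by exact_mod_cast hj
    have hj0 : (0 : ℝ) ≤ j := by positivity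
    have h4 : -(j * c) ≤ N * |c| := by
      have : (j : ℝ) * |c| ≤ N * |c| := by gcongr
      nlinarith [neg_abs_le c]
    nlinarith
  rw [hφc, dist_comm, Real.dist_eq]
  refine lt_of_le_of_lt (abs_le.2 ⟨?_, ?_⟩) hεδ
  · have := (le_div_iff₀ hn0).2 (show (c - 2 * ε) * n ≤ f n ω by linarith)
    linarith
  · have := (div_le_iff₀ hn0).2 (show f n ω ≤ (c + 2 * ε) * n by linarith)
    linarith
end

section
/- Let Ω be a compact metric space and T : Ω → Ω a homeomorphism such that (Ω,T) is minimal (every T-orbit is dense in Ω). Let A : Ω → SL(2,ℝ) be continuous and suppose that the limit lim_{n→∞} (1/n) log‖A(n,ω)‖ exists for every ω ∈ Ω. Then A is uniform: there is Λ ∈ ℝ such that (1/n) log‖A(n,ω)‖ → Λ as n → ∞ uniformly in ω ∈ Ω. -/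
open Filter Topology MeasureTheory

theorem matNorm_mul_le (M N : Matrix (Fin 2) (Fin 2) ℝ) :
    matNorm (M * N) ≤ matNorm M * matNorm N := by
  unfold matNorm
  have h : LinearMap.toContinuousLinearMap (Matrix.toEuclideanLin (M * N)) =
      (LinearMap.toContinuousLinearMap (Matrix.toEuclideanLin M)).comp
        (LinearMap.toContinuousLinearMap (Matrix.toEuclideanLin N)) := by
    ext v i
    simp [Matrix.toLpLin_apply, ← Matrix.mulVec_mulVec]
  rw [h]
  exact ContinuousLinearMap.opNorm_comp_le _ _

theorem continuous_matNorm : Continuous matNorm := by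
  have h : Continuous ((LinearMap.toContinuousLinearMap :
      (EuclideanSpace ℝ (Fin 2) →ₗ[ℝ] EuclideanSpace ℝ (Fin 2)) ≃ₗ[ℝ] _).toLinearMap ∘ₗ
      (Matrix.toEuclideanLin : Matrix (Fin 2) (Fin 2) ℝ ≃ₗ[ℝ] _).toLinearMap) :=
    LinearMap.continuous_of_finiteDimensional _
  exact h.norm

theorem slNorm_pos (M : SL2) : 0 < slNorm M := by
  unfold slNorm matNorm
  rw [norm_pos_iff]
  intro h
  have h1 : Matrix.toEuclideanLin (M : Matrix (Fin 2) (Fin 2) ℝ) = 0 := by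
    simpa using h
  have h2 : (M : Matrix (Fin 2) (Fin 2) ℝ) = 0 := by
    simpa using h1
  have h3 := M.det_coe
  rw [h2] at h3
  simp at h3

theorem slNorm_mul_le (M N : SL2) : slNorm (M * N) ≤ slNorm M * slNorm N := by
  unfold slNorm
  rw [Matrix.SpecialLinearGroup.coe_mul]
  exact matNorm_mul_le _ _

theorem log_slNorm_mul (M N : SL2) :
    |Real.log (slNorm (M * N)) - Real.log (slNorm M)| ≤
      |Real.log (slNorm N)| + |Real.log (slNorm N⁻¹)| := by
  have key : ∀ X Y : SL2, Real.log (slNorm (X * Y)) ≤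
      Real.log (slNorm X) + Real.log (slNorm Y) := by
    intro X Y
    rw [← Real.log_mul (slNorm_pos X).ne' (slNorm_pos Y).ne']
    exact Real.log_le_log (slNorm_pos _) (slNorm_mul_le X Y)
  have h1 := key M N
  have h2 := key (M * N) N⁻¹
  rw [mul_inv_cancel_right] at h2
  have h3 := le_abs_self (Real.log (slNorm N))
  have h4 := le_abs_self (Real.log (slNorm N⁻¹))
  have h5 := abs_nonneg (Real.log (slNorm N))
  have h6 := abs_nonneg (Real.log (slNorm N⁻¹))
  rw [abs_le]
  constructor <;> linarith

theorem cocycleH_add {Ω : Type*} (T : Ω → Ω) (A : Ω → SL2) (k m : ℕ) (ω : Ω) :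
    cocycleH T A (k + m) ω = cocycleH T A m (T^[k] ω) * cocycleH T A k ω := by
  induction m with
  | zero => simp [cocycleH]
  | succ m ih =>
    rw [← add_assoc]
    simp only [cocycleH]
    rw [ih, mul_assoc, ← Function.iterate_add_apply, add_comm m k]

theorem continuous_cocycleH {Ω : Type*} [TopologicalSpace Ω] (T : Ω → Ω) (hT : Continuous T)
    (A : Ω → SL2) (hA : Continuous fun ω => (A ω : Matrix (Fin 2) (Fin 2) ℝ)) (n : ℕ) :
    Continuous fun ω => (cocycleH T A n ω : Matrix (Fin 2) (Fin 2) ℝ) := by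
  induction n with
  | zero => simpa [cocycleH] using continuous_const
  | succ n ih =>
    simp only [cocycleH, Matrix.SpecialLinearGroup.coe_mul]
    exact (hA.comp (hT.iterate n)).matrix_mul ih

theorem continuous_log_slNorm {Ω : Type*} [TopologicalSpace Ω] (f : Ω → SL2)
    (hf : Continuous fun ω => (f ω : Matrix (Fin 2) (Fin 2) ℝ)) :
    Continuous fun ω => Real.log (slNorm (f ω)) :=
  Continuous.log (continuous_matNorm.comp hf) fun ω => (slNorm_pos (f ω)).ne'

theorem exists_bound {Ω : Type*} [TopologicalSpace Ω] [CompactSpace Ω] (T : Ω → Ω)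
    (hT : Continuous T) (A : Ω → SL2)
    (hA : Continuous fun ω => (A ω : Matrix (Fin 2) (Fin 2) ℝ)) (k : ℕ) :
    ∃ B : ℝ, ∀ m ω, |Real.log (slNorm (cocycleH T A (k + m) ω)) -
      Real.log (slNorm (cocycleH T A m (T^[k] ω)))| ≤ B := by
  have hc := continuous_cocycleH T hT A hA k
  have h1 := (continuous_log_slNorm _ hc).abs
  have h2 : Continuous fun ω => |Real.log (slNorm (cocycleH T A k ω)⁻¹)| := by
    refine (continuous_log_slNorm _ ?_).abs
    simp only [Matrix.SpecialLinearGroup.coe_inv]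
    exact hc.matrix_adjugate
  obtain ⟨B, hB⟩ := (isCompact_univ.image (h1.add h2)).bddAbove
  refine ⟨B, fun m ω => ?_⟩
  rw [cocycleH_add]
  exact (log_slNorm_mul _ _).trans (hB ⟨ω, trivial, rfl⟩)

theorem exists_visit {Ω : Type*} [MetricSpace Ω] [CompactSpace Ω] (T : Ω ≃ₜ Ω)
    (hmin : ∀ ω ρ : Ω, ρ ∈ closure (Set.range fun n : ℤ => (T.toEquiv ^ n) ω))
    (V : Set Ω) (hV : IsOpen V) (hne : V.Nonempty) :
    ∃ R : ℕ, ∀ ω, ∃ k ≤ R, (⇑T)^[k] ω ∈ V := by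
  have hz : ∀ n : ℤ, Continuous fun ω => (T.toEquiv ^ n) ω := by
    have hp : ∀ n : ℕ, Continuous fun ω => (T.toEquiv ^ n) ω := by
      intro n
      simpa [← Equiv.Perm.iterate_eq_pow] using T.continuous.iterate n
    intro n
    obtain ⟨m, rfl | rfl⟩ := n.eq_nat_or_neg
    · simpa using hp m
    · have : Continuous fun ω => ((T.symm.toEquiv : Equiv.Perm Ω) ^ m) ω := by
        simpa [← Equiv.Perm.iterate_eq_pow] using T.symm.continuous.iterate m
      have e : (T.toEquiv : Equiv.Perm Ω) ^ (-(m : ℤ)) = (T.symm.toEquiv : Equiv.Perm Ω) ^ m := by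
        rw [zpow_neg, zpow_natCast, ← inv_pow]
        rfl
      rw [e]
      exact this
  obtain ⟨t, ht⟩ := isCompact_univ.elim_finite_subcover
    (fun n : ℤ => (fun ω => (T.toEquiv ^ n) ω) ⁻¹' V) (fun n => hV.preimage (hz n)) (by
      intro ω _
      obtain ⟨ρ, hρ⟩ := hne
      obtain ⟨y, hy, n, rfl⟩ := mem_closure_iff.1 (hmin ω ρ) V hV hρ
      exact Set.mem_iUnion.2 ⟨n, hy⟩)
  set M : ℕ := t.sup Int.natAbs with hM
  refine ⟨2 * M, fun ω => ?_⟩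
  obtain ⟨n, hn, hnV⟩ := Set.mem_iUnion₂.1 (ht (Set.mem_univ ((T.toEquiv ^ (M : ℤ)) ω)))
  have hle : n.natAbs ≤ M := Finset.le_sup (f := Int.natAbs) hn
  refine ⟨(n + M).toNat, by omega, ?_⟩
  have h1 : (T.toEquiv ^ n) ((T.toEquiv ^ (M : ℤ)) ω) ∈ V := hnV
  rw [← Equiv.Perm.mul_apply, ← zpow_add] at h1
  have h2 : n + (M : ℤ) = ((n + M).toNat : ℤ) := by omega
  rw [h2, zpow_natCast, ← Equiv.Perm.iterate_eq_pow] at h1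
  exact h1

theorem uniform_est {Ω : Type*} [MetricSpace Ω] [CompactSpace Ω] [Nonempty Ω] (T : Ω ≃ₜ Ω)
    (hmin : ∀ ω ρ : Ω, ρ ∈ closure (Set.range fun n : ℤ => (T.toEquiv ^ n) ω))
    (F : ℕ → Ω → ℝ) (hF : ∀ n, Continuous (F n))
    (hB : ∀ k, ∃ B : ℝ, ∀ m ω, |F (k + m) ω - F m ((⇑T)^[k] ω)| ≤ B)
    (hex : ∀ ω, ∃ l : ℝ, Tendsto (fun n : ℕ => F n ω / n) atTop (𝓝 l))
    (ε : ℝ) (hε : 0 < ε) :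
    ∃ (c : ℝ) (N : ℕ), ∀ n ≥ N, ∀ ω, |F n ω / n - c| ≤ 3 * ε := by
  -- Baire category
  obtain ⟨N, hN⟩ : ∃ N : ℕ, (interior {ω | ∀ n ≥ N, |F n ω / n - F N ω / N| ≤ ε}).Nonempty := by
    apply nonempty_interior_of_iUnion_of_closed
    · intro N
      simp only [Set.setOf_forall]
      refine isClosed_iInter fun n => isClosed_iInter fun _ => ?_
      exact isClosed_le (((hF n).div_const _).sub ((hF N).div_const _)).abs continuous_const
    · refine Set.eq_univ_of_forall fun ω => ?_
      obtain ⟨l, hl⟩ := hex ω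
      obtain ⟨N, hN⟩ := Metric.cauchySeq_iff'.1 hl.cauchySeq ε hε
      exact Set.mem_iUnion.2 ⟨N, fun n hn => (hN n hn).le⟩
  obtain ⟨x₀, hx₀⟩ := hN
  set c : ℝ := F N x₀ / N with hc
  set V : Set Ω := interior {ω | ∀ n ≥ N, |F n ω / n - F N ω / N| ≤ ε} ∩
    {ω | |F N ω / N - c| < ε} with hVdef
  have hVo : IsOpen V := isOpen_interior.inter
    (isOpen_lt (((hF N).div_const _).sub continuous_const).abs continuous_const)
  have hVn : V.Nonempty := ⟨x₀, hx₀, by simpa [hc] using hε⟩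
  have hV : ∀ ω ∈ V, ∀ n ≥ N, |F n ω / n - c| ≤ 2 * ε := by
    intro ω hω n hn
    have h1 := interior_subset hω.1 n hn
    have h2 : |F N ω / N - c| < ε := hω.2
    have h3 := abs_sub_le (F n ω / n) (F N ω / N) c
    linarith
  obtain ⟨R, hR⟩ := exists_visit T hmin V hVo hVn
  choose B hB using hB
  set C : ℝ := ∑ k ∈ Finset.range (R + 1), |B k| with hC
  have hBC : ∀ k ≤ R, B k ≤ C := fun k hk =>
    (le_abs_self _).trans (Finset.single_le_sum (f := fun k => |B k|)
      (fun i _ => abs_nonneg _) (Finset.mem_range.2 (by omega)))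
  obtain ⟨N₁, hN₁⟩ := exists_nat_ge ((C + R * |c|) / ε)
  refine ⟨c, N + R + N₁ + 1, fun n hn ω => ?_⟩
  obtain ⟨k, hk, hkV⟩ := hR ω
  obtain ⟨m, rfl⟩ : ∃ m, n = k + m := ⟨n - k, by omega⟩
  have hm : N ≤ m := by omega
  have hm0 : (0 : ℝ) < m := by
    have : 0 < m := by omega
    exact_mod_cast this
  have hn0 : (0 : ℝ) < ((k + m : ℕ) : ℝ) := by
    push_cast; positivity
  have e1 := (hB k m ω).trans (hBC k hk)
  have e2 := hV _ hkV m hm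
  have e3 : |F m ((⇑T)^[k] ω) - m * c| ≤ 2 * ε * m := by
    have : F m ((⇑T)^[k] ω) - m * c = (F m ((⇑T)^[k] ω) / m - c) * m := by
      field_simp
    rw [this, abs_mul, abs_of_pos hm0]
    exact mul_le_mul_of_nonneg_right e2 hm0.le
  have e4 : C + R * |c| ≤ ε * ((k + m : ℕ) : ℝ) := by
    rw [div_le_iff₀ hε] at hN₁
    have : (N₁ : ℝ) ≤ ((k + m : ℕ) : ℝ) := by exact_mod_cast (by omega)
    nlinarith
  have e5 : |(k : ℝ) * c| ≤ R * |c| := by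
    rw [abs_mul, Nat.abs_cast]
    exact mul_le_mul_of_nonneg_right (by exact_mod_cast hk) (abs_nonneg _)
  have e6 : F (k + m) ω / ((k + m : ℕ) : ℝ) - c =
      (F (k + m) ω - ((k + m : ℕ) : ℝ) * c) / ((k + m : ℕ) : ℝ) := by
    field_simp
  rw [e6, abs_div, abs_of_pos hn0, div_le_iff₀ hn0]
  push_cast at e4 ⊢
  have hk0 : (0 : ℝ) ≤ k := Nat.cast_nonneg k
  have hk1 : 0 ≤ ε * k := by positivity
  rw [abs_le] at *
  constructor <;> nlinarith

/-- Over a compact metric minimal system, a continuous `SL(2,ℝ)`-valued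
function whose Lyapunov limit exists at every point is uniform. -/
theorem statement1 {Ω : Type*} [MetricSpace Ω] [CompactSpace Ω] (T : Ω ≃ₜ Ω)
    (hmin : ∀ ω ρ : Ω, ρ ∈ closure (Set.range fun n : ℤ => (T.toEquiv ^ n) ω))
    (A : Ω → SL2) (hA : Continuous fun ω => (A ω : Matrix (Fin 2) (Fin 2) ℝ))
    (hex : ∀ ω : Ω, ∃ l : ℝ, Filter.Tendsto
      (fun n : ℕ => Real.log (slNorm (cocycleH (⇑T) A n ω)) / n) Filter.atTop (nhds l)) :
    ∃ Λ : ℝ, TendstoUniformly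
      (fun (n : ℕ) (ω : Ω) => Real.log (slNorm (cocycleH (⇑T) A n ω)) / n)
      (fun _ => Λ) Filter.atTop := by
  rcases isEmpty_or_nonempty Ω with he | hne
  · exact ⟨0, Metric.tendstoUniformly_iff.2 fun ε _ => Eventually.of_forall fun n ω => he.elim ω⟩
  have est := uniform_est T hmin (fun n ω => Real.log (slNorm (cocycleH (⇑T) A n ω)))
    (fun n => continuous_log_slNorm _ (continuous_cocycleH _ T.continuous A hA n))
    (exists_bound _ T.continuous A hA) hex
  obtain ⟨ω₀⟩ := hne
  obtain ⟨l, hl⟩ := hex ω₀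
  refine ⟨l, Metric.tendstoUniformly_iff.2 fun ε hε => ?_⟩
  obtain ⟨c, N, h⟩ := est (ε / 9) (by positivity)
  have hlc : |l - c| ≤ 3 * (ε / 9) := by
    refine le_of_tendsto (hl.sub_const c).abs ?_
    filter_upwards [eventually_ge_atTop N] with n hn using h n hn ω₀
  filter_upwards [eventually_ge_atTop N] with n hn ω
  have h1 := h n hn ω
  rw [Real.dist_eq]
  rw [abs_le] at *
  rw [abs_lt]
  constructor <;> linarith
end

section
/- Let (Ω,T) be a subshift over a finite alphabet satisfying the leading sequence condition (LSC), i.e., conditions (α), (β) and (γ) hold with leading words ω^(1),…,ω^(r). Then (Ω,T) has uniform word frequencies: for every v ∈ W(Ω) there exists ν(v) ∈ ℝ such that (1/n)·#_v(ω(1)⋯ω(n)) → ν(v) as n → ∞, uniformly in ω ∈ Ω, where #_v(w) denotes the number of occurrences of v in the finite word w. -/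
open Filter Topology MeasureTheory

noncomputable section LSCproof

/-- diagonal SL2 matrix -/
def dMat (t : ℝ) : SL2 := ⟨Matrix.diagonal ![Real.exp t, Real.exp (-t)], by
  rw [Matrix.det_diagonal]
  simp [Fin.prod_univ_two, ← Real.exp_add]⟩

lemma dMat_mul (s t : ℝ) : dMat s * dMat t = dMat (s + t) := by
  apply Subtype.ext
  show Matrix.diagonal _ * Matrix.diagonal _ = Matrix.diagonal _
  rw [Matrix.diagonal_mul_diagonal]
  congr 1
  funext i
  fin_cases i
  · simp [Real.exp_add]
  · simp [Real.exp_add, mul_comm]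

lemma dMat_zero : dMat 0 = 1 := by
  apply Subtype.ext
  show Matrix.diagonal _ = (1 : Matrix (Fin 2) (Fin 2) ℝ)
  rw [← Matrix.diagonal_one]
  congr 1
  funext i
  fin_cases i <;> simp

lemma dMat_inv (t : ℝ) : (dMat t)⁻¹ = dMat (-t) := by
  rw [inv_eq_iff_mul_eq_one, dMat_mul, add_neg_cancel, dMat_zero]

open scoped Matrix.Norms.L2Operator in
lemma slNorm_dMat_aux (t : ℝ) :
    slNorm (dMat t) = ‖(![Real.exp t, Real.exp (-t)] : Fin 2 → ℝ)‖ := by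
  rw [← Matrix.l2_opNorm_diagonal (𝕜 := ℝ), Matrix.l2_opNorm_def]
  rfl

lemma log_slNorm (t : ℝ) (ht : 0 ≤ t) : Real.log (slNorm (dMat t)) = t := by
  rw [slNorm_dMat_aux]
  have : ‖(![Real.exp t, Real.exp (-t)] : Fin 2 → ℝ)‖ = Real.exp t := by
    apply le_antisymm
    · rw [pi_norm_le_iff_of_nonneg (Real.exp_pos t).le]
      intro i
      fin_cases i
      · simp
      · simp; linarith
    · have := norm_le_pi_norm (![Real.exp t, Real.exp (-t)] : Fin 2 → ℝ) 0
      simpa using this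
  rw [this, Real.log_exp]

lemma log_slNorm_inv (t : ℝ) (ht : 0 ≤ t) : Real.log (slNorm (dMat t)⁻¹) = t := by
  conv_rhs => rw [← log_slNorm t ht]
  rw [dMat_inv, slNorm_dMat_aux, slNorm_dMat_aux]
  congr 1
  rw [neg_neg]
  apply le_antisymm <;>
  · rw [pi_norm_le_iff_of_nonneg (norm_nonneg _)]
    intro i
    fin_cases i
    · exact norm_le_pi_norm (![Real.exp _, Real.exp _] : Fin 2 → ℝ) 1
    · exact norm_le_pi_norm (![Real.exp _, Real.exp _] : Fin 2 → ℝ) 0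

lemma word_eq' {𝒜 : Type*} (ω : ℤ → 𝒜) (k : ℤ) (n : ℕ) :
    word ω k n = (List.range n).map fun i : ℕ => ω (k + (i : ℤ)) := by
  unfold word
  generalize List.range n = l
  induction l with
  | nil => rfl
  | cons a l ih => simpa using ih

open Classical in
/-- occurrence indicator -/
def occI {𝒜 : Type*} (v : List 𝒜) (ω : ℤ → 𝒜) (k : ℤ) : ℝ := if occursAt v ω k then 1 else 0

lemma occI_nonneg {𝒜 : Type*} (v : List 𝒜) (ω : ℤ → 𝒜) (k : ℤ) : 0 ≤ occI v ω k := by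
  unfold occI; split_ifs <;> norm_num

lemma occI_le {𝒜 : Type*} (v : List 𝒜) (ω : ℤ → 𝒜) (k : ℤ) : occI v ω k ≤ 1 := by
  unfold occI; split_ifs <;> norm_num

lemma occI_congr {𝒜 : Type*} (v : List 𝒜) (ω ρ : ℤ → 𝒜) (k l : ℤ)
    (h : ∀ i : ℕ, i < v.length → ω (k + i) = ρ (l + i)) : occI v ω k = occI v ρ l := by
  have : word ω k v.length = word ρ l v.length := by
    rw [word_eq', word_eq']
    apply List.map_congr_left
    intro i hi
    exact h i (List.mem_range.1 hi)
  unfold occI occursAt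
  rw [this]

lemma occI_shift {𝒜 : Type*} (v : List 𝒜) (ω : ℤ → 𝒜) (k l : ℤ) :
    occI v (shift l ω) k = occI v ω (k + l) := by
  apply occI_congr
  intro i _
  unfold shift
  congr 1; ring

lemma cocycleP_dMat {𝒜 : Type*} (v : List 𝒜) (n : ℕ) (ω : ℤ → 𝒜) :
    cocycleP (fun ω => dMat (occI v ω 0)) n ω = dMat (∑ i ∈ Finset.range n, occI v ω i) := by
  induction n with
  | zero => simp [cocycleP, dMat_zero]
  | succ n ih =>
    rw [cocycleP, ih, dMat_mul, Finset.sum_range_succ, occI_shift, zero_add, add_comm]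

lemma locConst_dMat {𝒜 : Type*} (Ω : Set (ℤ → 𝒜)) (v : List 𝒜) :
    LocConstOn Ω (fun ω => dMat (occI v ω 0)) := by
  refine ⟨v.length, fun ω _ ρ _ h => ?_⟩
  show dMat _ = dMat _
  rw [occI_congr v ω ρ 0 0]
  intro i hi
  apply h
  rw [zero_add, abs_of_nonneg (by positivity)]
  exact_mod_cast hi.le

lemma err_bound (a : ℕ → ℝ) (Λ : ℝ) (h : Tendsto (fun n : ℕ => a n / n) atTop (𝓝 Λ))
    (ε : ℝ) (hε : 0 < ε) : ∃ C : ℝ, 0 ≤ C ∧ ∀ n : ℕ, |a n - Λ * n| ≤ ε * n + C := by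
  obtain ⟨M, hM⟩ := (Metric.tendsto_atTop.1 h) ε hε
  refine ⟨∑ i ∈ Finset.range (M + 1), |a i - Λ * i|, Finset.sum_nonneg fun _ _ => abs_nonneg _, ?_⟩
  intro n
  have hs : 0 ≤ ∑ i ∈ Finset.range (M + 1), |a i - Λ * i| :=
    Finset.sum_nonneg fun _ _ => abs_nonneg _
  by_cases hn : n < M + 1
  · have := Finset.single_le_sum (f := fun i : ℕ => |a i - Λ * i|)
      (fun _ _ => abs_nonneg _) (Finset.mem_range.2 hn)
    have h2 : 0 ≤ ε * n := by positivity
    linarith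
  · have hn0 : (0 : ℝ) < n := by
      have : 0 < n := by omega
      exact_mod_cast this
    have := hM n (by omega)
    rw [Real.dist_eq] at this
    have e : a n - Λ * n = (a n / n - Λ) * n := by field_simp
    rw [e, abs_mul, abs_of_pos hn0]
    nlinarith

lemma occCount_eq {𝒜 : Type*} (v : List 𝒜) (ω : ℤ → 𝒜) (n m : ℕ) (h : m + v.length = n + 1) :
    (occCount v ω n : ℝ) = ∑ i ∈ Finset.range m, occI v ω (1 + i) := by
  classical
  have hset : {k : ℤ | 1 ≤ k ∧ k + v.length ≤ (n : ℤ) + 1 ∧ occursAt v ω k} =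
      (((Finset.range m).filter fun i : ℕ => occursAt v ω (1 + i)).image
        (fun i : ℕ => (1 + i : ℤ)) : Finset ℤ) := by
    ext k
    simp only [Set.mem_ofPred_eq, Finset.coe_image, Set.mem_image, Finset.mem_coe,
      Finset.mem_filter, Finset.mem_range]
    constructor
    · rintro ⟨h1, h2, h3⟩
      refine ⟨(k - 1).toNat, ⟨by omega, ?_⟩, by omega⟩
      have : (1 + ((k - 1).toNat : ℤ)) = k := by omega
      rwa [this]
    · rintro ⟨i, ⟨hi, ho⟩, rfl⟩
      exact ⟨by omega, by omega, ho⟩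
  unfold occCount
  rw [hset, Set.ncard_coe_finset, Finset.card_image_of_injective]
  · simp only [occI, Finset.sum_boole]
  · intro a b hab
    simpa using hab

lemma sum_cmp (h : ℕ → ℝ) (h0 : ∀ i, 0 ≤ h i) (h1 : ∀ i, h i ≤ 1) (m L : ℕ) :
    |∑ i ∈ Finset.range m, h (1 + i) - ∑ i ∈ Finset.range (m + L), h i| ≤ L + 1 := by
  have e1 : ∑ i ∈ Finset.range m, h (1 + i) = ∑ i ∈ Finset.range m, h i + h m - h 0 := by
    have a := Finset.sum_range_succ h m
    have b := Finset.sum_range_succ' h m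
    simp only [add_comm 1]
    linarith
  rw [e1, Finset.sum_range_add]
  have e2 : ∑ i ∈ Finset.range L, h (m + i) ≤ L := by
    calc _ ≤ ∑ i ∈ Finset.range L, (1 : ℝ) := Finset.sum_le_sum fun i _ => h1 _
      _ = L := by simp
  have e3 : 0 ≤ ∑ i ∈ Finset.range L, h (m + i) := Finset.sum_nonneg fun i _ => h0 _
  have := h0 m; have := h1 m; have := h0 0; have := h1 0
  rw [abs_le]; constructor <;> linarith

end LSCproof

/-- A subshift satisfying the leading sequence condition (LSC) has
uniform word frequencies (is uniquely ergodic). -/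
theorem statement3 {𝒜 : Type*} [Fintype 𝒜] [TopologicalSpace 𝒜] [DiscreteTopology 𝒜]
    {Ω : Set (ℤ → 𝒜)} (hΩ : IsSubshift Ω) (hLSC : SatisfiesLSC Ω) :
    UniformWordFreq Ω := by
  obtain ⟨r, lead, ⟨hlead, N, hα⟩, hβ, -⟩ := hLSC
  intro v hv
  obtain ⟨Λ, hΛ⟩ := hβ _ (locConst_dMat Ω v)
  have hF : ∀ j, Tendsto (fun n : ℕ =>
      (∑ i ∈ Finset.range n, occI v (lead j) i) / n) atTop (𝓝 Λ) := by
    intro j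
    refine (hΛ j).1.congr fun n => ?_
    rw [cocycle, if_pos (by positivity), Int.toNat_natCast, cocycleP_dMat, log_slNorm]
    exact Finset.sum_nonneg fun _ _ => occI_nonneg _ _ _
  have hB : ∀ j, Tendsto (fun n : ℕ =>
      (∑ i ∈ Finset.range n, occI v (lead j) (i + -(n : ℤ))) / n) atTop (𝓝 Λ) := by
    intro j
    refine (hΛ j).2.congr fun n => ?_
    rcases Nat.eq_zero_or_pos n with rfl | hn
    · simp
    · rw [cocycle, if_neg (by omega), neg_neg, Int.toNat_natCast, cocycleP_dMat, log_slNorm_inv]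
      · simp only [occI_shift]
      · exact Finset.sum_nonneg fun _ _ => occI_nonneg _ _ _
  refine ⟨Λ, ?_⟩
  rw [Metric.tendstoUniformlyOn_iff]
  intro ε hε
  choose C hC0 hC using fun j => err_bound _ Λ (hF j) (ε / 2) (by positivity)
  choose D hD0 hD using fun j => err_bound _ Λ (hB j) (ε / 2) (by positivity)
  set K : ℝ := ∑ j, (C j + D j) + v.length + 1 with hK
  have hlarge : ∀ᶠ n : ℕ in atTop, K / (ε / 2) < (n : ℝ) :=
    (tendsto_natCast_atTop_atTop (R := ℝ)).eventually_gt_atTop _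
  filter_upwards [hlarge, eventually_ge_atTop N, eventually_ge_atTop v.length,
    eventually_gt_atTop 0] with n hn hN hL hpos ω hω
  have hn0 : (0 : ℝ) < n := by exact_mod_cast hpos
  rw [div_lt_iff₀ (by positivity)] at hn
  have hw : word ω 1 n ∈ WordsN Ω n := ⟨ω, hω, 1, rfl⟩
  rw [hα n hN] at hw
  obtain ⟨j, k, hk, hw⟩ := hw
  have hpt : ∀ i : ℕ, i < n → ω (1 + i) = lead j (1 - k + i) := by
    intro i hi
    rw [word_eq', word_eq'] at hw
    have := List.map_inj_left.1 hw i (List.mem_range.2 hi)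
    exact this
  have hv1 : 1 ≤ v.length := hv.1
  obtain ⟨m, hm⟩ : ∃ m, m + v.length = n + 1 := ⟨n + 1 - v.length, by omega⟩
  have hocc : (occCount v ω n : ℝ) =
      ∑ i ∈ Finset.range m, occI v (lead j) ((((1 + i : ℕ) : ℤ)) + -(k : ℤ)) := by
    rw [occCount_eq v ω n m hm]
    apply Finset.sum_congr rfl
    intro i hi
    rw [Finset.mem_range] at hi
    apply occI_congr
    intro l hl
    have := hpt (i + l) (by omega)
    push_cast at this ⊢
    rw [add_assoc, this]
    congr 1; ring
  have hcmp := sum_cmp (fun i : ℕ => occI v (lead j) ((i : ℤ) + -(k : ℤ)))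
    (fun _ => occI_nonneg _ _ _) (fun _ => occI_le _ _ _) m (v.length - 1)
  rw [← hocc, show m + (v.length - 1) = k + (n - k) by omega, Finset.sum_range_add] at hcmp
  have hre : ∑ i ∈ Finset.range (n - k), occI v (lead j) (((k + i : ℕ) : ℤ) + -(k : ℤ)) =
      ∑ i ∈ Finset.range (n - k), occI v (lead j) i := by
    apply Finset.sum_congr rfl
    intro i _
    congr 1; push_cast; ring
  simp only [hre] at hcmp
  have h1 := hC j (n - k)
  have h2 := hD j k
  have h3 : C j + D j ≤ ∑ j, (C j + D j) :=
    Finset.single_le_sum (f := fun j => C j + D j)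
      (fun j _ => add_nonneg (hC0 j) (hD0 j)) (Finset.mem_univ j)
  rw [Nat.cast_sub hk] at h1
  rw [Nat.cast_sub hv1] at hcmp
  rw [dist_comm, Real.dist_eq]
  have e : (occCount v ω n : ℝ) / n - Λ = (occCount v ω n - Λ * n) / n := by field_simp
  rw [e, abs_div, abs_of_pos hn0, div_lt_iff₀ hn0]
  rw [abs_le] at h1 h2 hcmp
  push_cast at hcmp
  rw [abs_lt]
  constructor <;> nlinarith [h1.1, h1.2, h2.1, h2.2, hcmp.1, hcmp.2]
end

section
/- Let (Ω,T) be a minimal subshift over a finite alphabet with uniform word frequencies (uniquely ergodic) that satisfies the leading sequence condition (LSC), i.e., conditions (α), (β) and (γ). Then every locally constant A : Ω → SL(2,ℝ) is uniform: there is Λ ∈ ℝ such that (1/n) log‖A(n,ω)‖ → Λ as n → ∞ uniformly in ω ∈ Ω. -/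
open Filter Topology MeasureTheory

namespace LSC

abbrev E2 := EuclideanSpace ℝ (Fin 2)

/-- The determinant form. -/
def dt (v w : E2) : ℝ := v 0 * w 1 - v 1 * w 0

lemma slAct_zero' (M : SL2) (v : E2) :
    slAct M v 0 = M.1 0 0 * v 0 + M.1 0 1 * v 1 := by
  simp [slAct, Matrix.toEuclideanLin, Matrix.mulVec, dotProduct, Fin.sum_univ_two]

lemma slAct_one' (M : SL2) (v : E2) :
    slAct M v 1 = M.1 1 0 * v 0 + M.1 1 1 * v 1 := by
  simp [slAct, Matrix.toEuclideanLin, Matrix.mulVec, dotProduct, Fin.sum_univ_two]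

lemma slAct_mul (M P : SL2) (v : E2) : slAct (M * P) v = slAct M (slAct P v) := by
  ext i
  fin_cases i <;> simp [slAct_zero', slAct_one', Matrix.mul_apply, Fin.sum_univ_two] <;> ring

lemma slAct_id (v : E2) : slAct 1 v = v := by
  ext i
  fin_cases i <;> simp [slAct_zero', slAct_one']

lemma slAct_inv_self (M : SL2) (v : E2) : slAct M⁻¹ (slAct M v) = v := by
  rw [← slAct_mul, inv_mul_cancel, slAct_id]

lemma slAct_self_inv (M : SL2) (v : E2) : slAct M (slAct M⁻¹ v) = v := by
  rw [← slAct_mul, mul_inv_cancel, slAct_id]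

lemma slAct_smul (M : SL2) (c : ℝ) (v : E2) : slAct M (c • v) = c • slAct M v := by
  simp [slAct]

lemma slAct_add (M : SL2) (v w : E2) : slAct M (v + w) = slAct M v + slAct M w := by
  simp [slAct]

lemma slNorm_nonneg (M : SL2) : 0 ≤ slNorm M := norm_nonneg _

lemma slAct_le (M : SL2) (v : E2) : ‖slAct M v‖ ≤ slNorm M * ‖v‖ :=
  ContinuousLinearMap.le_opNorm (LinearMap.toContinuousLinearMap (Matrix.toEuclideanLin M.1)) v

lemma slNorm_le (M : SL2) {c : ℝ} (hc : 0 ≤ c) (h : ∀ v, ‖slAct M v‖ ≤ c * ‖v‖) : slNorm M ≤ c :=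
  ContinuousLinearMap.opNorm_le_bound _ hc h

lemma slAct_ne (M : SL2) {v : E2} (hv : v ≠ 0) : slAct M v ≠ 0 := by
  intro h
  apply hv
  rw [← slAct_inv_self M v, h]
  simp [slAct]

lemma norm_sq2 (v : E2) : ‖v‖ ^ 2 = v 0 ^ 2 + v 1 ^ 2 := by
  rw [EuclideanSpace.norm_sq_eq]; simp [Fin.sum_univ_two]

lemma dt_act (M : SL2) (v w : E2) : dt (slAct M v) (slAct M w) = dt v w := by
  have h := M.2
  rw [Matrix.det_fin_two] at h
  simp only [dt, slAct_zero', slAct_one']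
  linear_combination (v 0 * w 1 - v 1 * w 0) * h

lemma dt_le (v w : E2) : |dt v w| ≤ ‖v‖ * ‖w‖ := by
  apply abs_le_of_sq_le_sq _ (by positivity)
  rw [mul_pow, norm_sq2, norm_sq2, dt]
  nlinarith [sq_nonneg (v 0 * w 0 + v 1 * w 1)]

lemma slNorm_mul_le (M P : SL2) : slNorm (M * P) ≤ slNorm M * slNorm P := by
  apply slNorm_le _ (mul_nonneg (slNorm_nonneg _) (slNorm_nonneg _))
  intro v
  rw [slAct_mul, mul_assoc]
  exact (slAct_le _ _).trans (mul_le_mul_of_nonneg_left (slAct_le _ _) (slNorm_nonneg _))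

lemma slNorm_inv_le (M : SL2) : slNorm M⁻¹ ≤ slNorm M := by
  apply slNorm_le _ (slNorm_nonneg _)
  intro v
  set u := slAct M⁻¹ v with hu
  by_cases h0 : u = 0
  · rw [h0]; simp only [norm_zero]; exact mul_nonneg (slNorm_nonneg _) (norm_nonneg _)
  have hup : 0 < ‖u‖ := norm_pos_iff.2 h0
  let w : E2 := !₂[-u 1, u 0]
  have hw : ‖w‖ = ‖u‖ := by
    have : ‖w‖ ^ 2 = ‖u‖ ^ 2 := by
      rw [norm_sq2, norm_sq2]; simp [w]; ring
    exact (pow_left_inj₀ (norm_nonneg _) (norm_nonneg _) two_ne_zero).1 this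
  have h1 : dt u w = ‖u‖ ^ 2 := by rw [norm_sq2]; simp [dt, w]; ring
  have h2 : dt u w = dt v (slAct M w) := by
    rw [← dt_act M u w, hu, slAct_self_inv]
  have h3 := (dt_le v (slAct M w)).trans
    (mul_le_mul_of_nonneg_left (slAct_le M w) (norm_nonneg v))
  rw [← h2, h1, hw, abs_of_nonneg (by positivity)] at h3
  nlinarith

lemma slNorm_inv (M : SL2) : slNorm M⁻¹ = slNorm M := by
  apply le_antisymm (slNorm_inv_le M)
  simpa using slNorm_inv_le M⁻¹

lemma one_le_slNorm (M : SL2) : 1 ≤ slNorm M := by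
  let e : E2 := !₂[1, 0]
  have he : ‖e‖ = 1 := by
    have : ‖e‖ ^ 2 = 1 := by rw [norm_sq2]; simp [e]
    nlinarith [norm_nonneg e]
  have h1 := slAct_le M⁻¹ (slAct M e)
  have h2 := slAct_le M e
  rw [slAct_inv_self, slNorm_inv, he] at h1
  rw [he] at h2
  nlinarith [slNorm_nonneg M]

lemma slNorm_pos (M : SL2) : 0 < slNorm M := zero_lt_one.trans_le (one_le_slNorm M)

lemma exists_contr (M : SL2) : ∃ v : E2, ‖v‖ = 1 ∧ ‖slAct M v‖ ≤ 2 / slNorm M := by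
  have hM := slNorm_pos M
  obtain ⟨x, hx, hr⟩ := ContinuousLinearMap.exists_lt_apply_of_lt_opNorm
    (LinearMap.toContinuousLinearMap (Matrix.toEuclideanLin (M⁻¹).1)) (r := slNorm M⁻¹ / 2)
    (by rw [slNorm_inv]; change _ < slNorm M⁻¹; rw [slNorm_inv]; linarith)
  change slNorm M⁻¹ / 2 < ‖slAct M⁻¹ x‖ at hr
  rw [slNorm_inv] at hr
  have hp : 0 < ‖slAct M⁻¹ x‖ := by linarith
  refine ⟨(‖slAct M⁻¹ x‖)⁻¹ • slAct M⁻¹ x, ?_, ?_⟩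
  · rw [norm_smul, norm_inv, norm_norm, inv_mul_cancel₀ hp.ne']
  · rw [slAct_smul, slAct_self_inv, norm_smul, norm_inv, norm_norm, inv_mul_eq_div,
      div_le_div_iff₀ hp hM]
    nlinarith [norm_nonneg x]

lemma unit_close (a b : E2) (ha : ‖a‖ = 1) (hb : ‖b‖ = 1) :
    ‖a - b‖ ≤ 2 * |dt a b| ∨ ‖a - -b‖ ≤ 2 * |dt a b| := by
  have h1 := norm_sq2 a
  have h2 := norm_sq2 b
  rw [ha] at h1
  rw [hb] at h2
  have key : (a 0 * b 0 + a 1 * b 1) ^ 2 + dt a b ^ 2 = 1 := by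
    simp only [dt]
    linear_combination (-(b 0 ^2 + b 1 ^2)) * h1 - h2
  rcases le_total 0 (a 0 * b 0 + a 1 * b 1) with h | h
  · left
    apply le_of_sq_le_sq _ (by positivity)
    rw [norm_sq2, mul_pow, sq_abs]
    simp only [PiLp.sub_apply]
    nlinarith
  · right
    apply le_of_sq_le_sq _ (by positivity)
    rw [norm_sq2, mul_pow, sq_abs]
    simp only [PiLp.sub_apply, PiLp.neg_apply]
    nlinarith

lemma lin_bound {f : ℕ → ℝ} {L : ℝ} (h : Tendsto (fun n : ℕ => f n / n) atTop (𝓝 L))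
    {ε : ℝ} (hε : 0 < ε) : ∃ C : ℝ, 0 ≤ C ∧ ∀ n : ℕ, |f n - L * n| ≤ ε * n + C := by
  obtain ⟨N, hN⟩ := Metric.tendsto_atTop.1 h ε hε
  refine ⟨∑ n ∈ Finset.range (N + 1), |f n - L * n|,
    Finset.sum_nonneg fun _ _ => abs_nonneg _, fun n => ?_⟩
  by_cases hn : n < N + 1
  · have := Finset.single_le_sum (f := fun n : ℕ => |f n - L * n|) (fun i _ => abs_nonneg _)
      (Finset.mem_range.2 hn)
    have h2 : 0 ≤ ε * n := by positivity
    linarith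
  · have hn' : N < n := by omega
    have hpos : (0 : ℝ) < n := by exact_mod_cast (Nat.zero_le N).trans_lt hn'
    have h1 := hN n hn'.le
    rw [Real.dist_eq] at h1
    have h2 : f n - L * n = (f n / n - L) * n := by field_simp
    rw [h2, abs_mul, abs_of_pos hpos]
    have h3 : 0 ≤ ∑ n ∈ Finset.range (N + 1), |f n - L * n| :=
      Finset.sum_nonneg fun _ _ => abs_nonneg _
    nlinarith

lemma ruelle (M a : ℕ → SL2) (hM : ∀ n, M (n + 1) = a n * M n) (K : ℝ)
    (hK : ∀ n, slNorm (a n) ≤ K) (L : ℝ) (hL : 0 < L)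
    (h : Tendsto (fun n : ℕ => Real.log (slNorm (M n)) / n) atTop (𝓝 L))
    (ε : ℝ) (hε : 0 < ε) (hεL : ε < L) :
    ∃ v : E2, v ≠ 0 ∧ ∃ C : ℝ, ∀ n : ℕ, Real.log ‖slAct (M n) v‖ ≤ -(L - ε) * n + C := by
  obtain ⟨C, hC0, hC⟩ := lin_bound h (ε := ε / 3) (by linarith)
  have hlow : ∀ n : ℕ, Real.exp (-C) * Real.exp ((L - ε / 3) * n) ≤ slNorm (M n) := by
    intro n
    rw [← Real.exp_add, ← Real.le_log_iff_exp_le (slNorm_pos _)]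
    have := (abs_le.1 (hC n)).1
    linarith
  have hup : ∀ n : ℕ, slNorm (M n) ≤ Real.exp C * Real.exp ((L + ε / 3) * n) := by
    intro n
    rw [← Real.exp_add, ← Real.log_le_iff_le_exp (slNorm_pos _)]
    have := (abs_le.1 (hC n)).2
    linarith
  choose u hu1 hu2 using fun n => exists_contr (M n)
  -- sign-corrected sequence
  have hK1 : 1 ≤ K := (one_le_slNorm _).trans (hK 0)
  let D : ℝ := 8 * K * Real.exp C ^ 2
  let r : ℝ := Real.exp (-2 * (L - ε / 3))
  have hinv : ∀ n, 1 / slNorm (M n) ≤ Real.exp C * Real.exp (-(L - ε / 3) * n) := by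
    intro n
    rw [div_le_iff₀ (slNorm_pos _)]
    have h1 := mul_le_mul_of_nonneg_left (hlow n)
      (by positivity : 0 ≤ Real.exp C * Real.exp (-(L - ε / 3) * n))
    refine le_trans (le_of_eq ?_) h1
    rw [← Real.exp_add, ← Real.exp_add, ← Real.exp_add, eq_comm, Real.exp_eq_one_iff]
    ring
  have hstep : ∀ n (x y : E2), ‖x‖ = 1 → ‖y‖ = 1 → ‖slAct (M n) x‖ ≤ 2 / slNorm (M n) →
      ‖slAct (M (n + 1)) y‖ ≤ 2 / slNorm (M (n + 1)) → 2 * |dt x y| ≤ D * r ^ n := by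
    intro n x y hx hy hMx hMy
    have e1 : slAct (M n) y = slAct (a n)⁻¹ (slAct (M (n + 1)) y) := by
      rw [hM, slAct_mul, slAct_inv_self]
    have e2 : ‖slAct (M n) y‖ ≤ K * (2 / slNorm (M (n + 1))) := by
      rw [e1]
      refine (slAct_le _ _).trans ?_
      rw [slNorm_inv]
      exact mul_le_mul (hK n) hMy (norm_nonneg _) (by linarith)
    have e3 : |dt x y| ≤ (2 / slNorm (M n)) * (K * (2 / slNorm (M (n + 1)))) := by
      rw [← dt_act (M n)]
      exact (dt_le _ _).trans (mul_le_mul hMx e2 (norm_nonneg _)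
        (div_nonneg (by norm_num) (slNorm_nonneg _)))
    have e4 : 1 / slNorm (M (n + 1)) ≤ Real.exp C * Real.exp (-(L - ε / 3) * n) := by
      refine (hinv (n + 1)).trans ?_
      refine mul_le_mul_of_nonneg_left (Real.exp_le_exp.2 ?_) (Real.exp_pos _).le
      push_cast
      nlinarith
    have e5 : r ^ n = Real.exp (-(L - ε / 3) * n) * Real.exp (-(L - ε / 3) * n) := by
      rw [← Real.exp_nat_mul, ← Real.exp_add]; congr 1; ring
    have e6 := mul_le_mul (hinv n) e4 (div_nonneg (by norm_num) (slNorm_nonneg _))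
      (by positivity)
    calc 2 * |dt x y| ≤ 2 * ((2 / slNorm (M n)) * (K * (2 / slNorm (M (n + 1))))) := by gcongr
      _ = 8 * K * (1 / slNorm (M n) * (1 / slNorm (M (n + 1)))) := by ring
      _ ≤ 8 * K * (Real.exp C * Real.exp (-(L - ε / 3) * n) *
          (Real.exp C * Real.exp (-(L - ε / 3) * n))) := by gcongr
      _ = D * r ^ n := by rw [e5]; simp only [D]; ring
  let P : ℕ → E2 → Prop := fun n x => ‖x‖ = 1 ∧ ‖slAct (M n) x‖ ≤ 2 / slNorm (M n)
  have hex : ∀ n (x : E2), P n x → ∃ y, P (n + 1) y ∧ ‖x - y‖ ≤ D * r ^ n := by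
    intro n x hx
    have h1 := hstep n x (u (n + 1)) hx.1 (hu1 _) hx.2 (hu2 _)
    rcases unit_close x (u (n + 1)) hx.1 (hu1 _) with h2 | h2
    · exact ⟨u (n + 1), ⟨hu1 _, hu2 _⟩, h2.trans h1⟩
    · refine ⟨-u (n + 1), ⟨by rw [norm_neg]; exact hu1 _, ?_⟩, h2.trans h1⟩
      have : slAct (M (n + 1)) (-u (n + 1)) = - slAct (M (n + 1)) (u (n + 1)) := by simp [slAct]
      rw [this, norm_neg]; exact hu2 _
  choose! g hg1 hg2 using hex
  let w : ℕ → E2 := fun n => Nat.rec (u 0) (fun k x => g k x) n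
  have hwP : ∀ n, P n (w n) := by
    intro n
    induction n with
    | zero => exact ⟨hu1 0, hu2 0⟩
    | succ k ih => exact hg1 k _ ih
  have hwd : ∀ n, dist (w n) (w (n + 1)) ≤ D * r ^ n := by
    intro n
    rw [dist_eq_norm]
    exact hg2 n _ (hwP n)
  have hr1 : r < 1 := by
    rw [Real.exp_lt_one_iff]; nlinarith
  obtain ⟨v, hv⟩ := cauchySeq_tendsto_of_complete (cauchySeq_of_le_geometric r D hr1 hwd)
  have hdist := dist_le_of_le_geometric_of_tendsto r D hr1 hwd hv
  have hvn : ‖v‖ = 1 := by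
    have h1 : Tendsto (fun n => ‖w n‖) atTop (𝓝 ‖v‖) := hv.norm
    have h2 : (fun n => ‖w n‖) = fun _ => (1 : ℝ) := funext fun n => (hwP n).1
    rw [h2] at h1
    exact tendsto_nhds_unique h1 tendsto_const_nhds
  have hv0 : v ≠ 0 := by
    intro h0; rw [h0] at hvn; simp at hvn
  refine ⟨v, hv0, Real.log (2 * Real.exp C + Real.exp C * (D / (1 - r))), fun n => ?_⟩
  have hpos : 0 < ‖slAct (M n) v‖ := norm_pos_iff.2 (slAct_ne _ hv0)
  have hDr : 0 ≤ D / (1 - r) := div_nonneg (by positivity) (by linarith)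
  have hQ : 0 < 2 * Real.exp C + Real.exp C * (D / (1 - r)) := by positivity
  rw [Real.log_le_iff_le_exp hpos, Real.exp_add, Real.exp_log hQ]
  have h1 : ‖slAct (M n) v‖ ≤ ‖slAct (M n) (w n)‖ + slNorm (M n) * dist (w n) v := by
    have : v = w n + (v - w n) := by abel
    conv_lhs => rw [this, slAct_add]
    refine (norm_add_le _ _).trans ?_
    rw [dist_comm, dist_eq_norm]
    gcongr
    exact slAct_le _ _
  have h2 : ‖slAct (M n) (w n)‖ ≤ 2 * Real.exp C * Real.exp (-(L - ε) * n) := by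
    refine (hwP n).2.trans ?_
    have e : Real.exp (-(L - ε / 3) * n) ≤ Real.exp (-(L - ε) * n) := by
      gcongr; linarith
    calc 2 / slNorm (M n) = 2 * (1 / slNorm (M n)) := by ring
      _ ≤ 2 * (Real.exp C * Real.exp (-(L - ε / 3) * n)) := by gcongr; exact hinv n
      _ ≤ 2 * (Real.exp C * Real.exp (-(L - ε) * n)) := by gcongr
      _ = _ := by ring
  have h3 : slNorm (M n) * dist (w n) v ≤
      Real.exp C * (D / (1 - r)) * Real.exp (-(L - ε) * n) := by
    refine (mul_le_mul (hup n) (hdist n) dist_nonneg (by positivity)).trans (le_of_eq ?_)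
    have e5 : Real.exp (-(L - ε) * n) = Real.exp ((L + ε / 3) * n) * r ^ n := by
      rw [← Real.exp_nat_mul, ← Real.exp_add]; congr 1; ring
    rw [e5]; ring
  calc _ ≤ _ := h1
    _ ≤ _ := add_le_add h2 h3
    _ = _ := by ring

section coc
variable {𝒜 : Type*}

lemma shift_shift (a b : ℤ) (ω : ℤ → 𝒜) : shift a (shift b ω) = shift (a + b) ω := by
  funext n; simp [shift, add_assoc]

lemma shift_z (ω : ℤ → 𝒜) : shift 0 ω = ω := by
  funext n; simp [shift]

lemma shift_mem_all [TopologicalSpace 𝒜] {Ω : Set (ℤ → 𝒜)} (hΩ : IsSubshift Ω) (k : ℤ) :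
    ∀ ω ∈ Ω, shift k ω ∈ Ω := by
  induction k using Int.induction_on with
  | zero => intro ω h; rwa [shift_z]
  | succ i ih =>
    intro ω h
    rw [add_comm, ← shift_shift]
    exact hΩ.shift_mem _ (ih ω h)
  | pred i ih =>
    intro ω h
    rw [sub_eq_add_neg, add_comm, ← shift_shift]
    exact hΩ.shift_neg_mem _ (ih ω h)

lemma cocycle_nat (A : (ℤ → 𝒜) → SL2) (n : ℕ) (ω : ℤ → 𝒜) :
    cocycle A n ω = cocycleP A n ω := by
  simp [cocycle]

lemma cocycle_neg (A : (ℤ → 𝒜) → SL2) (n : ℕ) (ω : ℤ → 𝒜) :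
    cocycle A (-(n : ℤ)) ω = (cocycleP A n (shift (-(n : ℤ)) ω))⁻¹ := by
  rcases Nat.eq_zero_or_pos n with rfl | h
  · simp [cocycle, cocycleP]
  · have : ¬ (0 ≤ -(n : ℤ)) := by omega
    simp only [cocycle, if_neg this]
    simp

lemma cocycleP_add (A : (ℤ → 𝒜) → SL2) (m k : ℕ) (ω : ℤ → 𝒜) :
    cocycleP A (m + k) ω = cocycleP A m (shift k ω) * cocycleP A k ω := by
  induction m with
  | zero => simp [cocycleP]
  | succ m ih =>
    rw [show m + 1 + k = (m + k) + 1 by ring]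
    simp only [cocycleP]
    rw [ih, shift_shift, mul_assoc]
    push_cast
    rfl

lemma exists_K [Fintype 𝒜] {Ω : Set (ℤ → 𝒜)} (A : (ℤ → 𝒜) → SL2) (hA : LocConstOn Ω A) :
    ∃ K : ℝ, 1 ≤ K ∧ ∀ ω ∈ Ω, slNorm (A ω) ≤ K := by
  obtain ⟨N, hN⟩ := hA
  let I := {i : ℤ // i ∈ Finset.Icc (-(N : ℤ)) N}
  let R : Set (I → 𝒜) := {f | ∃ ω ∈ Ω, f = fun i => ω i.1}
  have hR : R.Finite := Set.toFinite _
  have : ∀ f : I → 𝒜, ∃ K : ℝ, ∀ ω ∈ Ω, (f = fun i => ω i.1) → slNorm (A ω) ≤ K := by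
    intro f
    by_cases hf : f ∈ R
    · obtain ⟨ρ, hρ, rfl⟩ := hf
      refine ⟨slNorm (A ρ), fun ω hω h => ?_⟩
      rw [hN ω hω ρ hρ]
      intro i hi
      exact (congrFun h ⟨i, Finset.mem_Icc.2 (abs_le.1 hi)⟩).symm
    · exact ⟨0, fun ω hω h => (hf ⟨ω, hω, h⟩).elim⟩
  choose κ hκ using this
  obtain ⟨B, hB⟩ := (Set.finite_range κ).bddAbove
  refine ⟨max 1 B, le_max_left _ _, fun ω hω => ?_⟩
  exact (hκ _ ω hω rfl).trans ((hB ⟨_, rfl⟩).trans (le_max_right _ _))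

/-- log norm -/
noncomputable def LN (A : (ℤ → 𝒜) → SL2) (n : ℕ) (ω : ℤ → 𝒜) : ℝ := Real.log (slNorm (cocycleP A n ω))

lemma log_mul_le (M P : SL2) :
    Real.log (slNorm (M * P)) ≤ Real.log (slNorm M) + Real.log (slNorm P) := by
  rw [← Real.log_mul (slNorm_pos _).ne' (slNorm_pos _).ne']
  exact Real.log_le_log (slNorm_pos _) (slNorm_mul_le _ _)

lemma stab_one (A : (ℤ → 𝒜) → SL2) (K : ℝ) (n : ℕ) (ω : ℤ → 𝒜)
    (h1 : slNorm (A ω) ≤ K) (h2 : slNorm (A (shift n ω)) ≤ K) :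
    |LN A n (shift 1 ω) - LN A n ω| ≤ 2 * Real.log K := by
  have e : cocycleP A n (shift 1 ω) * A ω = A (shift n ω) * cocycleP A n ω := by
    have h := cocycleP_add A n 1 ω
    simp only [cocycleP] at h
    simpa [shift_z] using h.symm
  have e1 : cocycleP A n (shift 1 ω) = A (shift n ω) * (cocycleP A n ω * (A ω)⁻¹) := by
    rw [← mul_assoc, ← e, mul_inv_cancel_right]
  have e2 : cocycleP A n ω = (A (shift n ω))⁻¹ * (cocycleP A n (shift 1 ω) * A ω) := by
    rw [e, inv_mul_cancel_left]
  have l1 := Real.log_le_log (slNorm_pos _) h1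
  have l2 := Real.log_le_log (slNorm_pos _) h2
  have f1 := (log_mul_le (A (shift n ω)) (cocycleP A n ω * (A ω)⁻¹)).trans
    (add_le_add_right (log_mul_le _ _) _)
  have f2 := (log_mul_le (A (shift n ω))⁻¹ (cocycleP A n (shift 1 ω) * A ω)).trans
    (add_le_add_right (log_mul_le _ _) _)
  rw [← e1, slNorm_inv] at f1
  rw [← e2, slNorm_inv] at f2
  rw [abs_le]
  unfold LN
  constructor <;> linarith

lemma stab [TopologicalSpace 𝒜] {Ω : Set (ℤ → 𝒜)} (hΩ : IsSubshift Ω)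
    (A : (ℤ → 𝒜) → SL2) (K : ℝ)
    (hK : ∀ ω ∈ Ω, slNorm (A ω) ≤ K) (n q : ℕ) (ω : ℤ → 𝒜) (hω : ω ∈ Ω) :
    |LN A n (shift q ω) - LN A n ω| ≤ q * (2 * Real.log K) := by
  induction q with
  | zero => simp [shift_z]
  | succ q ih =>
    have hm := shift_mem_all hΩ q ω hω
    have h1 := stab_one A K n (shift q ω) (hK _ hm) (hK _ (shift_mem_all hΩ _ _ hm))
    rw [shift_shift] at h1
    have e : ((q + 1 : ℕ) : ℤ) = 1 + (q : ℤ) := by push_cast; ring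
    rw [e]
    calc |LN A n (shift (1 + (q : ℤ)) ω) - LN A n ω|
        ≤ |LN A n (shift (1 + (q : ℤ)) ω) - LN A n (shift q ω)| + |LN A n (shift q ω) - LN A n ω| :=
          abs_sub_le _ _ _
      _ ≤ _ := by push_cast; linarith

lemma limsup_neg {f : ℕ → ℝ} {c C l D : ℝ} (hc : 0 < c) (h : ∀ n : ℕ, f n ≤ -c * n + C)
    (h2 : ∀ n : ℕ, - l * n - D ≤ f n) :
    limsup (fun n : ℕ => f n / n) atTop < 0 := by
  have ht : ∀ x : ℝ, Tendsto (fun n : ℕ => x / (n : ℝ)) atTop (𝓝 0) :=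
    fun x => tendsto_const_div_atTop_nhds_zero_nat x
  have hle : limsup (fun n : ℕ => f n / n) atTop ≤ -c / 2 := by
    apply limsup_le_of_le
    · apply IsCoboundedUnder.of_frequently_ge (a := - l - 1)
      apply Eventually.frequently
      filter_upwards [(ht D).eventually (gt_mem_nhds zero_lt_one), eventually_gt_atTop 0]
        with n h3 h4
      have hn : (0 : ℝ) < n := by exact_mod_cast h4
      rw [div_lt_iff₀ hn] at h3
      rw [le_div_iff₀ hn]
      linarith [h2 n]
    · filter_upwards [(ht C).eventually (gt_mem_nhds (half_pos hc)), eventually_gt_atTop 0]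
        with n h3 h4
      have hn : (0 : ℝ) < n := by exact_mod_cast h4
      rw [div_lt_iff₀ hn] at h3
      rw [div_le_iff₀ hn]
      linarith [h n]
  linarith

lemma act_lower (M : SL2) {v : E2} (hv : v ≠ 0) :
    Real.log ‖v‖ - Real.log (slNorm M) ≤ Real.log ‖slAct M v‖ := by
  have h := slAct_le M⁻¹ (slAct M v)
  rw [slAct_inv_self, slNorm_inv] at h
  have h2 := Real.log_le_log (norm_pos_iff.2 hv) h
  rw [Real.log_mul (slNorm_pos _).ne' (norm_ne_zero_iff.2 (slAct_ne M hv))] at h2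
  linarith

lemma parallel {v w : E2} (hv : v ≠ 0) (h : dt v w = 0) : ∃ c : ℝ, w = c • v := by
  unfold dt at h
  by_cases h0 : v 0 = 0
  · have h1 : v 1 ≠ 0 := by
      intro h1; apply hv; ext i; fin_cases i <;> simp [h0, h1]
    refine ⟨w 1 / v 1, ?_⟩
    have hw : w 0 = 0 := by
      rw [h0] at h; simpa [h1] using h
    ext i; fin_cases i
    · simp [h0, hw]
    · simp; field_simp
  · refine ⟨w 0 / v 0, ?_⟩
    ext i; fin_cases i
    · simp; field_simp
    · simp; field_simp; linarith

lemma log_lower_of_tendsto {M : ℕ → SL2} {L : ℝ}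
    (h : Tendsto (fun n : ℕ => Real.log (slNorm (M n)) / n) atTop (𝓝 L)) {v : E2} (hv : v ≠ 0) :
    ∃ l D : ℝ, ∀ n : ℕ, -l * n - D ≤ Real.log ‖slAct (M n) v‖ := by
  obtain ⟨C, -, hC⟩ := lin_bound h zero_lt_one
  refine ⟨L + 1, C - Real.log ‖v‖, fun n => ?_⟩
  have h1 := act_lower (M n) hv
  have h2 := (abs_le.1 (hC n)).2
  linarith

lemma core [TopologicalSpace 𝒜] {Ω : Set (ℤ → 𝒜)} (hΩ : IsSubshift Ω)
    (A : (ℤ → 𝒜) → SL2) (K : ℝ)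
    (hK : ∀ ω ∈ Ω, slNorm (A ω) ≤ K) (l : ℤ → 𝒜) (hl : l ∈ Ω) (L : ℝ)
    (hp : Tendsto (fun n : ℕ => Real.log (slNorm (cocycle A n l)) / n) atTop (𝓝 L))
    (hn : Tendsto (fun n : ℕ => Real.log (slNorm (cocycle A (-(n : ℤ)) l)) / n) atTop (𝓝 L))
    (hγ : ∀ v : EuclideanSpace ℝ (Fin 2), v ≠ 0 →
    ¬ (limsup (fun n : ℕ => Real.log ‖slAct (cocycle A n l) v‖ / n) atTop < 0 ∧
       limsup (fun n : ℕ => Real.log ‖slAct (cocycle A (-(n : ℤ)) l) v‖ / n) atTop < 0))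
    (ε : ℝ) (hε : 0 < ε) :
    ∃ C : ℝ, ∀ n k : ℕ, k ≤ n → |LN A n (shift (-(k : ℤ)) l) - L * n| ≤ ε * n + C := by
  let B : ℕ → SL2 := fun n => cocycle A n l
  let D : ℕ → SL2 := fun n => cocycle A (-(n : ℤ)) l
  change Tendsto (fun n : ℕ => Real.log (slNorm (B n)) / n) atTop (𝓝 L) at hp
  change Tendsto (fun n : ℕ => Real.log (slNorm (D n)) / n) atTop (𝓝 L) at hn
  change ∀ v : E2, v ≠ 0 →
    ¬ (limsup (fun n : ℕ => Real.log ‖slAct (B n) v‖ / n) atTop < 0 ∧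
       limsup (fun n : ℕ => Real.log ‖slAct (D n) v‖ / n) atTop < 0) at hγ
  have hBs : ∀ n, B (n + 1) = A (shift n l) * B n := by
    intro n
    simp only [B, cocycle_nat, cocycleP]
  have hDs : ∀ n : ℕ, D (n + 1) = (A (shift (-((n + 1 : ℕ) : ℤ)) l))⁻¹ * D n := by
    intro n
    simp only [D, cocycle_neg]
    rw [cocycleP_add A n 1, mul_inv_rev, shift_shift]
    have e : ((1 : ℕ) : ℤ) + -((n + 1 : ℕ) : ℤ) = -(n : ℤ) := by push_cast; ring
    rw [e]
    simp [cocycleP, shift_z]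
  have hfac : ∀ n k : ℕ, k ≤ n → cocycleP A n (shift (-(k : ℤ)) l) = B (n - k) * (D k)⁻¹ := by
    intro n k hk
    obtain ⟨m, rfl⟩ := Nat.exists_eq_add_of_le' hk
    simp only [B, D, cocycle_neg, cocycle_nat, inv_inv, Nat.add_sub_cancel]
    rw [cocycleP_add, shift_shift]
    simp [shift_z]
  obtain ⟨C1, hC10, hC1⟩ := lin_bound hp hε
  obtain ⟨C2, hC20, hC2⟩ := lin_bound hn hε
  have hupper : ∀ n k : ℕ, k ≤ n →
      LN A n (shift (-(k : ℤ)) l) - L * n ≤ ε * n + (C1 + C2) := by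
    intro n k hk
    unfold LN
    rw [hfac n k hk]
    have h1 := log_mul_le (B (n - k)) (D k)⁻¹
    rw [slNorm_inv] at h1
    have h2 := (abs_le.1 (hC1 (n - k))).2
    have h3 := (abs_le.1 (hC2 k)).2
    rw [Nat.cast_sub hk] at h2
    linarith
  suffices hlow : ∃ C : ℝ, ∀ n k : ℕ, k ≤ n →
      -(ε * n + C) ≤ LN A n (shift (-(k : ℤ)) l) - L * n by
    obtain ⟨C, hC⟩ := hlow
    refine ⟨max C (C1 + C2), fun n k hk => abs_le.2 ⟨?_, ?_⟩⟩
    · linarith [hC n k hk, le_max_left C (C1 + C2)]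
    · linarith [hupper n k hk, le_max_right C (C1 + C2)]
  rcases le_or_gt L 0 with hL | hL
  · refine ⟨0, fun n k hk => ?_⟩
    have h1 : 0 ≤ LN A n (shift (-(k : ℤ)) l) := Real.log_nonneg (one_le_slNorm _)
    have hn0 : (0 : ℝ) ≤ n := Nat.cast_nonneg n
    nlinarith
  let η := min ε (L / 2)
  have hη0 : 0 < η := lt_min hε (half_pos hL)
  have hηε : η ≤ ε := min_le_left _ _
  have hηL : η < L := (min_le_right _ _).trans_lt (half_lt_self hL)
  obtain ⟨vp, hvp0, Cp, hvp⟩ := ruelle B (fun n => A (shift n l)) hBs K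
    (fun n => hK _ (shift_mem_all hΩ _ _ hl)) L hL hp η hη0 hηL
  obtain ⟨vm, hvm0, Cm, hvm⟩ := ruelle D (fun n => (A (shift (-((n + 1 : ℕ) : ℤ)) l))⁻¹) hDs K
    (fun n => by rw [slNorm_inv]; exact hK _ (shift_mem_all hΩ _ _ hl)) L hL hn η hη0 hηL
  have hd : dt vp vm ≠ 0 := by
    intro h0
    obtain ⟨c, hc⟩ := parallel hvp0 h0
    have hc0 : c ≠ 0 := by rintro rfl; apply hvm0; simp [hc]
    obtain ⟨l1, D1, h1⟩ := log_lower_of_tendsto hp hvm0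
    obtain ⟨l2, D2, h2⟩ := log_lower_of_tendsto hn hvm0
    refine hγ vm hvm0 ⟨?_, ?_⟩
    · refine limsup_neg (c := L - η) (C := Cp + Real.log |c|) (by linarith) (fun n => ?_) h1
      rw [hc, slAct_smul, norm_smul, Real.log_mul (by simpa using hc0)
        (norm_ne_zero_iff.2 (slAct_ne _ hvp0)), Real.norm_eq_abs]
      linarith [hvp n]
    · exact limsup_neg (c := L - η) (by linarith) hvm h2
  refine ⟨Cp + Cm - Real.log |dt vp vm|, fun n k hk => ?_⟩
  unfold LN
  rw [hfac n k hk]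
  have hB0 := norm_ne_zero_iff.2 (slAct_ne (B (n - k)) hvp0)
  have hB1 := norm_ne_zero_iff.2 (slAct_ne (B (n - k)) hvm0)
  have hD1 := norm_ne_zero_iff.2 (slAct_ne (D k) hvm0)
  have g1 := dt_le (slAct (B (n - k)) vp) (slAct (B (n - k)) vm)
  rw [dt_act] at g1
  have g2 := Real.log_le_log (abs_pos.2 hd) g1
  rw [Real.log_mul hB0 hB1] at g2
  have g3 := slAct_le (B (n - k) * (D k)⁻¹) (slAct (D k) vm)
  rw [slAct_mul, slAct_inv_self] at g3
  have g4 := Real.log_le_log (lt_of_le_of_ne (norm_nonneg _) hB1.symm) g3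
  rw [Real.log_mul (slNorm_pos _).ne' hD1] at g4
  have g5 := hvp (n - k)
  have g6 := hvm k
  rw [Nat.cast_sub hk] at g5
  have hn0 : (0 : ℝ) ≤ n := Nat.cast_nonneg n
  have g7 : η * n ≤ ε * n := mul_le_mul_of_nonneg_right hηε hn0
  linarith

lemma word_map (ω : ℤ → 𝒜) (k : ℤ) (n : ℕ) :
    word ω k n = (List.range n).map fun i : ℕ => ω (k + (i : ℤ)) := by
  have h : ∀ l : List ℕ, List.flatMap (fun a : ℕ => [(a : ℤ)]) l = l.map (fun a : ℕ => (a : ℤ)) := by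
    intro l
    induction l with
    | nil => rfl
    | cons x t ih => simp [List.flatMap_cons, ih]
  change List.map (fun i => ω (k + i)) (List.flatMap (fun a : ℕ => [(a : ℤ)]) (List.range n)) = _
  rw [h, List.map_map]
  rfl

lemma word_eq {ω ρ : ℤ → 𝒜} {a b : ℤ} {n : ℕ} (h : word ω a n = word ρ b n) (i : ℕ) (hi : i < n) :
    ω (a + i) = ρ (b + i) := by
  have := congrArg (fun l => l[i]?) h
  rw [word_map, word_map] at this
  simpa [hi] using this

lemma cocycleP_congr (A : (ℤ → 𝒜) → SL2) (n : ℕ) (ω ρ : ℤ → 𝒜)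
    (h : ∀ i : ℕ, i < n → A (shift i ω) = A (shift i ρ)) : cocycleP A n ω = cocycleP A n ρ := by
  induction n with
  | zero => rfl
  | succ n ih =>
    simp only [cocycleP]
    rw [h n (Nat.lt_succ_self n), ih fun i hi => h i (hi.trans (Nat.lt_succ_self n))]

end coc

end LSC

open LSC

/-- **Main technical result.** Over a minimal uniquely ergodic subshift
satisfying (LSC), every locally constant `SL(2,ℝ)`-valued function is uniform. -/
theorem statement5 {𝒜 : Type*} [Fintype 𝒜] [TopologicalSpace 𝒜] [DiscreteTopology 𝒜]
    {Ω : Set (ℤ → 𝒜)} (hΩ : IsSubshift Ω) (hmin : IsMinimalSubshift Ω)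
    (hue : UniformWordFreq Ω) (hLSC : SatisfiesLSC Ω)
    (A : (ℤ → 𝒜) → SL2) (hA : LocConstOn Ω A) :
    IsUniform Ω A := by
  obtain ⟨r, lead, ⟨hlead, N0, hN0⟩, hβ, hγ⟩ := hLSC
  obtain ⟨L, hL⟩ := hβ A hA
  obtain ⟨K, hK1, hK⟩ := exists_K A hA
  have hA' := hA
  obtain ⟨Nw, hNw⟩ := hA'
  refine ⟨L, ?_⟩
  rw [Metric.tendstoUniformlyOn_iff]
  intro ε hε
  have hcore : ∀ j, ∃ C : ℝ, ∀ n k : ℕ, k ≤ n →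
      |LN A n (shift (-(k : ℤ)) (lead j)) - L * n| ≤ ε / 2 * n + C := fun j =>
    core hΩ A K hK (lead j) (hlead j) L (hL j).1 (hL j).2 (hγ A hA j) (ε / 2) (half_pos hε)
  choose C hC using hcore
  obtain ⟨C0, hC0⟩ := (Set.finite_range C).bddAbove
  have hlogK : 0 ≤ Real.log K := Real.log_nonneg hK1
  have hmain : ∀ n : ℕ, N0 ≤ n → ∀ ω ∈ Ω,
      |LN A n ω - L * n| ≤ ε / 2 * n + (C0 + (Nw + 1) * (2 * Real.log K)) := by
    intro n hn ω hω
    have hmem : word ω (-(Nw : ℤ)) (n + 2 * Nw) ∈ WordsN Ω (n + 2 * Nw) := ⟨ω, hω, _, rfl⟩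
    rw [hN0 _ (by omega)] at hmem
    obtain ⟨j, k, hk, hw⟩ := hmem
    have heq : cocycleP A n ω = cocycleP A n (shift (1 - (k : ℤ) + Nw) (lead j)) := by
      apply cocycleP_congr
      intro i hi
      apply hNw _ (shift_mem_all hΩ _ _ hω) _
        (shift_mem_all hΩ _ _ (shift_mem_all hΩ _ _ (hlead j)))
      intro t ht
      rw [abs_le] at ht
      have h1 := word_eq hw (t + i + Nw).toNat (by omega)
      rw [Int.toNat_of_nonneg (by omega)] at h1
      simp only [shift]
      convert h1 using 2 <;> ring
    have hLN : LN A n ω = LN A n (shift (1 - (k : ℤ) + Nw) (lead j)) := by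
      unfold LN; rw [heq]
    rw [hLN]
    have hCj : C j ≤ C0 := hC0 ⟨j, rfl⟩
    -- generic finishing step
    have hfin : ∀ (k' q : ℕ), k' ≤ n → q ≤ Nw + 1 → 
        (1 - (k : ℤ) + Nw = q + -(k' : ℤ) ∨ -(k' : ℤ) = q + (1 - (k : ℤ) + Nw)) →
        |LN A n (shift (1 - (k : ℤ) + Nw) (lead j)) - L * n| ≤
          ε / 2 * n + (C0 + (Nw + 1) * (2 * Real.log K)) := by
      intro k' q hk' hq hor
      have hst : |LN A n (shift (1 - (k : ℤ) + Nw) (lead j)) - LN A n (shift (-(k' : ℤ)) (lead j))|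
          ≤ q * (2 * Real.log K) := by
        rcases hor with h | h
        · rw [h, ← shift_shift (q : ℤ) (-(k' : ℤ))]
          exact stab hΩ A K hK n q _ (shift_mem_all hΩ _ _ (hlead j))
        · rw [h, ← shift_shift (q : ℤ) (1 - (k : ℤ) + Nw), abs_sub_comm]
          exact stab hΩ A K hK n q _ (shift_mem_all hΩ _ _ (hlead j))
      have h1 := hC j n k' hk'
      have h2 : (q : ℝ) * (2 * Real.log K) ≤ (Nw + 1) * (2 * Real.log K) := by
        apply mul_le_mul_of_nonneg_right _ (by linarith)
        exact_mod_cast hq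
      have h3 := abs_sub_le (LN A n (shift (1 - (k : ℤ) + Nw) (lead j)))
        (LN A n (shift (-(k' : ℤ)) (lead j))) (L * n)
      linarith
    rcases le_or_gt (1 - (k : ℤ) + Nw) 0 with h0 | h0
    · rcases le_or_gt (k - 1 - (Nw : ℤ)) n with h1 | h1
      · exact hfin (k - 1 - Nw) 0 (by omega) (by omega) (by left; omega)
      · exact hfin n (k - 1 - Nw - n) le_rfl (by omega) (by right; omega)
    · exact hfin 0 (1 + Nw - k) (by omega) (by omega) (by left; omega)
  have ht : Tendsto (fun n : ℕ => (C0 + (Nw + 1) * (2 * Real.log K)) / (n : ℝ)) atTop (𝓝 0) :=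
    tendsto_const_div_atTop_nhds_zero_nat _
  filter_upwards [ht.eventually (gt_mem_nhds (half_pos hε)), eventually_gt_atTop 0,
    eventually_ge_atTop N0] with n h1 h2 h3 ω hω
  have hn : (0 : ℝ) < n := by exact_mod_cast h2
  rw [div_lt_iff₀ hn] at h1
  have h4 := hmain n h3 ω hω
  rw [dist_comm, Real.dist_eq, cocycle_nat]
  change |LN A n ω / n - L| < ε
  have h5 : LN A n ω / n - L = (LN A n ω - L * n) / n := by field_simp
  rw [h5, abs_div, abs_of_pos hn, div_lt_iff₀ hn]
  linarith
end

section
/- Let (Ω,T) be a subshift over a finite alphabet, ω ∈ Ω and p := ω(1)ω(2)⋯ the one-sided word given by the restriction of ω to {1,2,…}. Let F : W(Ω) → ℝ be subadditive with asymptotic mean F̄. Assume (i) p satisfies condition (PQ), and (ii) there is a sequence (p^(n)) of prefixes of p with |p^(n)| → ∞ and F(p^(n))/|p^(n)| → F̄. Then lim_{n→∞} F(p(1)⋯p(n))/n exists and equals F̄. -/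
open Filter Topology MeasureTheory

theorem aux_len {A : Type*} (ω : ℤ → A) (k : ℤ) (n : ℕ) : (word ω k n).length = n := by
  simp [word]

theorem aux_append {A : Type*} (ω : ℤ → A) (k : ℤ) (a b : ℕ) :
    word ω k (a + b) = word ω k a ++ word ω (k + a) b := by
  simp [word, List.range_add, List.map_flatMap, List.flatMap_map, add_assoc]

theorem aux_pack (H : ℤ → ℕ → ℝ) (hH : ∀ k a b, H k (a + b) ≤ H k a + H (k + a) b)
    (C η : ℝ) (hC : ∀ k n, H k n ≤ C) (N : ℕ) (S : Finset ℤ) :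
    ∀ n : ℕ, (∀ k ∈ S, 1 ≤ k ∧ k + N ≤ (n : ℤ) + 1 ∧ H k N ≤ -η) →
    (∀ k ∈ S, ∀ l ∈ S, k ≠ l → (N : ℤ) ≤ |k - l|) →
    H 1 n ≤ S.card * (C - η) + C := by
  induction S using Finset.induction_on_max with
  | empty => intro n _ _; simpa using hC 1 n
  | insert k S hmax ih =>
    intro n h1 h2
    have hk := h1 k (Finset.mem_insert_self _ _)
    obtain ⟨a, ha⟩ : ∃ a : ℕ, (a : ℤ) = k - 1 := ⟨(k - 1).toNat, by omega⟩
    obtain ⟨b, hb⟩ : ∃ b : ℕ, n = a + (N + b) := ⟨n - a - N, by omega⟩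
    have hS := ih a (by
      intro l hl
      have := h1 l (Finset.mem_insert_of_mem hl)
      have hlt := hmax l hl
      have h3 := h2 k (Finset.mem_insert_self _ _) l (Finset.mem_insert_of_mem hl) (by omega)
      rw [abs_of_nonneg (by omega)] at h3
      exact ⟨this.1, by omega, this.2.2⟩)
      (fun x hx y hy => h2 x (Finset.mem_insert_of_mem hx) y (Finset.mem_insert_of_mem hy))
    have hnot : k ∉ S := fun h => lt_irrefl _ (hmax k h)
    rw [Finset.card_insert_of_notMem hnot, hb]
    have e1 := hH 1 a (N + b)
    have e2 := hH (1 + a) N b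
    have e3 := hC (1 + a + N) b
    have e4 : (1 : ℤ) + a = k := by omega
    rw [e4] at e1 e2 e3
    push_cast
    linarith [hk.2.2]

theorem aux_disj {A : Type*} (v : List A) (hv : 1 ≤ v.length) (ω : ℤ → A) (n : ℕ) :
    ∃ S : Finset ℤ, S.card = disjCount v ω n ∧
    (∀ k ∈ S, 1 ≤ k ∧ k + v.length ≤ (n : ℤ) + 1 ∧ occursAt v ω k) ∧
    (∀ k ∈ S, ∀ l ∈ S, k ≠ l → (v.length : ℤ) ≤ |k - l|) := by
  have := Nat.sSup_mem (s := {m : ℕ | ∃ S : Finset ℤ, S.card = m ∧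
    (∀ k ∈ S, 1 ≤ k ∧ k + v.length ≤ (n : ℤ) + 1 ∧ occursAt v ω k) ∧
    (∀ k ∈ S, ∀ l ∈ S, k ≠ l → (v.length : ℤ) ≤ |k - l|)}) ⟨0, ∅, by simp⟩ ⟨n, by
      rintro m ⟨S, rfl, h, -⟩
      have : S ⊆ Finset.Icc 1 (n : ℤ) := by
        intro k hk
        have := h k hk
        rw [Finset.mem_Icc]
        omega
      simpa using Finset.card_le_card this⟩
  exact this

theorem aux_bound {A : Type*} [Fintype A] {Ω : Set (ℤ → A)} (F : List A → ℝ) (Fb : ℝ)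
    (hFb : IsAsympMean Ω F Fb) (δ : ℝ) (hδ : 0 < δ) :
    ∃ M : ℕ, ∀ n ≥ M, ∀ x ∈ WordsN Ω n, F x ≤ (Fb + δ) * n := by
  have h := (hFb.eventually (gt_mem_nhds (show Fb < Fb + δ by linarith))).and
    (eventually_ge_atTop 1)
  obtain ⟨M, hM⟩ := eventually_atTop.1 h
  refine ⟨M, fun n hn x hx => ?_⟩
  obtain ⟨h1, h2⟩ := hM n hn
  have hfin : (WordsN Ω n).Finite := by
    refine (List.finite_length_eq A n).subset ?_
    rintro x ⟨ρ, -, k, rfl⟩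
    exact aux_len _ _ _
  have := le_csSup (hfin.image (fun x => F x / (n : ℝ))).bddAbove (Set.mem_image_of_mem _ hx)
  have hn0 : (0 : ℝ) < n := by exact_mod_cast h2
  have h3 : F x / n ≤ Fb + δ := this.trans h1.le
  exact (div_le_iff₀ hn0).1 h3


/-- If the one-sided word `p = ω(1)ω(2)⋯` satisfies (PQ) and a
subadditive `F` attains its asymptotic mean `F̄` along some sequence of prefixes of `p`,
then `F(p(1)⋯p(n))/n → F̄`. -/
theorem statement7 {𝒜 : Type*} [Fintype 𝒜] [TopologicalSpace 𝒜] [DiscreteTopology 𝒜]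
    {Ω : Set (ℤ → 𝒜)} (hΩ : IsSubshift Ω) (ω : ℤ → 𝒜) (hω : ω ∈ Ω)
    (F : List 𝒜 → ℝ) (hF : SubadditiveOn Ω F) (Fb : ℝ) (hFb : IsAsympMean Ω F Fb)
    (hPQ : CondPQ ω)
    (hpref : ∃ m : ℕ → ℕ, Filter.Tendsto m Filter.atTop Filter.atTop ∧
      Filter.Tendsto (fun n : ℕ => F (word ω 1 (m n)) / (m n)) Filter.atTop (nhds Fb)) :
    Filter.Tendsto (fun n : ℕ => F (word ω 1 n) / n) Filter.atTop (nhds Fb) := by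
  have upper : ∀ δ > 0, ∀ᶠ n : ℕ in atTop, F (word ω 1 n) / n ≤ Fb + δ := by
    intro δ hδ
    obtain ⟨M, hM⟩ := aux_bound F Fb hFb δ hδ
    filter_upwards [eventually_ge_atTop M, eventually_ge_atTop 1] with n hn hn1
    have hn0 : (0 : ℝ) < n := by exact_mod_cast hn1
    exact (div_le_iff₀ hn0).2 (hM n hn _ ⟨ω, hω, 1, rfl⟩)
  refine tendsto_order.2 ⟨fun a ha => ?_, fun a ha => ?_⟩
  swap
  · filter_upwards [upper ((a - Fb) / 2) (by linarith)] with n hn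
    linarith
  by_contra hcon
  obtain ⟨c, hc, hPQ⟩ := hPQ
  obtain ⟨m, hm, hlim⟩ := hpref
  set ε := Fb - a with hε
  have hεp : 0 < ε := by linarith
  set δ := c * ε / 8 with hδ
  have hδp : 0 < δ := by positivity
  obtain ⟨M, hM⟩ := aux_bound F Fb hFb δ hδp
  obtain ⟨C₀, hC₀⟩ := ((List.finite_length_lt 𝒜 M).image
    (fun x => F x - (Fb + δ) * x.length)).bddAbove
  set C := max C₀ 0 with hCdef
  have hC0 : 0 ≤ C := le_max_right _ _
  let H : ℤ → ℕ → ℝ := fun k n => if n = 0 then 0 else F (word ω k n) - (Fb + δ) * n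
  have hHC : ∀ k n, H k n ≤ C := by
    intro k n
    by_cases h0 : n = 0
    · simp [H, h0, hC0]
    simp only [H, h0, if_false]
    by_cases hn : n < M
    · have := hC₀ (Set.mem_image_of_mem _ (show word ω k n ∈ {l : List 𝒜 | l.length < M} by
        simpa [aux_len] using hn))
      simp only [aux_len] at this
      exact this.trans (le_max_left _ _)
    · have := hM n (by omega) (word ω k n) ⟨ω, hω, k, rfl⟩
      linarith
  have hmem : ∀ k n, n ≠ 0 → word ω k n ∈ Words Ω := by
    intro k n hn
    refine ⟨by rw [aux_len]; omega, ω, hω, k, by rw [aux_len]⟩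
  have hHsub : ∀ k a b, H k (a + b) ≤ H k a + H (k + a) b := by
    intro k a b
    by_cases ha0 : a = 0
    · subst ha0; simp [H]
    by_cases hb0 : b = 0
    · subst hb0; simp [H]
    have hab : a + b ≠ 0 := by omega
    simp only [H, ha0, hb0, hab, if_false]
    have := hF (word ω k a) (word ω (k + a) b) (hmem _ _ ha0) (hmem _ _ hb0)
      (by rw [← aux_append]; exact hmem _ _ hab)
    rw [← aux_append] at this
    push_cast
    linarith
  obtain ⟨N₀, hN₀⟩ := exists_nat_gt (2 * C / ε)
  rw [not_eventually] at hcon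
  obtain ⟨N, hN, hNa⟩ := (frequently_atTop.1 hcon) (max N₀ 1)
  have hN1 : 1 ≤ N := (le_max_right _ _).trans hN
  have hNp : (0 : ℝ) < N := by exact_mod_cast hN1
  have hNC : C ≤ ε * N / 2 := by
    have h1 : (N₀ : ℝ) ≤ N := by exact_mod_cast (le_max_left _ _).trans hN
    have h2 : 2 * C / ε ≤ N := hN₀.le.trans h1
    rw [div_le_iff₀ hεp] at h2
    linarith
  have hFN : F (word ω 1 N) ≤ a * N := (div_le_iff₀ hNp).1 (not_lt.1 hNa)
  have hev : ∀ᶠ n : ℕ in atTop,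
      c / 2 < (N : ℝ) / n * disjCount (word ω 1 N) ω n := by
    refine eventually_lt_of_lt_liminf (lt_of_lt_of_le (by linarith) (hPQ N hN1)) ?_
    exact ⟨0, by simp only [eventually_map]; exact Eventually.of_forall fun n => by positivity⟩
  have hmain : ∀ᶠ n : ℕ in atTop, F (word ω 1 n) / n ≤ Fb + δ - c * ε / 4 + C / n := by
    filter_upwards [hev, eventually_ge_atTop 1] with n hn hn1
    have hn0 : (0 : ℝ) < n := by exact_mod_cast hn1
    obtain ⟨S, hS, hS1, hS2⟩ := aux_disj (word ω 1 N) (by rw [aux_len]; exact hN1) ω n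
    rw [← hS] at hn
    simp only [aux_len, occursAt] at hS1 hS2
    have hp := aux_pack H hHsub C (ε * N) hHC N S n (by
      intro k hk
      obtain ⟨h1, h2, h3⟩ := hS1 k hk
      refine ⟨h1, h2, ?_⟩
      have hNn : N ≠ 0 := by omega
      simp only [H, hNn, if_false]
      rw [← h3]
      have : 0 ≤ δ * N := by positivity
      have e : ε * N = Fb * N - a * N := by rw [hε]; ring
      linarith) hS2
    have hnn : n ≠ 0 := by omega
    simp only [H, hnn, if_false] at hp
    have hcount : c / 2 * n < N * S.card := by
      have : (N : ℝ) / n * S.card = (N * S.card) / n := by ring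
      rw [this, lt_div_iff₀ hn0] at hn
      exact hn
    have e1 : (S.card : ℝ) * (C - ε * N) ≤ S.card * (-(ε * N / 2)) :=
      mul_le_mul_of_nonneg_left (by linarith) (by positivity)
    have e2 : ε / 2 * (c / 2 * n) ≤ ε / 2 * (N * S.card) :=
      mul_le_mul_of_nonneg_left hcount.le (by positivity)
    rw [div_le_iff₀ hn0]
    have e3 : (Fb + δ - c * ε / 4 + C / n) * n = (Fb + δ) * n - c * ε / 4 * n + C := by
      field_simp
    rw [e3]
    linarith
  have hR : Tendsto (fun n : ℕ => Fb + δ - c * ε / 4 + C / n) atTop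
      (𝓝 (Fb + δ - c * ε / 4 + 0)) :=
    tendsto_const_nhds.add (tendsto_const_div_atTop_nhds_zero_nat C)
  have := le_of_tendsto_of_tendsto hlim (hR.comp hm) (hm.eventually hmain)
  have : 0 < c * ε := by positivity
  linarith
end

section
/- Let (Ω,T) be a subshift over a finite alphabet and ω ∈ Ω. Assume there is a sequence (w_k) of finite words with |w_k| → ∞ such that for each k the threefold concatenation w_k w_k w_k occurs in ω at position −|w_k| or at position −2|w_k| (i.e., ω = ⋯w_k|w_k w_k⋯ or ω = ⋯w_k w_k|w_k⋯ around the origin). Then for every locally constant A : Ω → SL(2,ℝ) and every v ∈ ℝ²∖{0}, it is not the case that ‖A(n,ω)v‖ → 0 as n → +∞ and ‖A(n,ω)v‖ → 0 as n → −∞; in particular, at most one of limsup_{n→+∞} (1/n) log‖A(n,ω)v‖ and limsup_{n→−∞} (1/|n|) log‖A(n,ω)v‖ is negative. -/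
open Filter Topology MeasureTheory

section helpers9

theorem h9_act_mul (X Y : SL2) (v : EuclideanSpace ℝ (Fin 2)) :
    slAct (X * Y) v = slAct X (slAct Y v) := by
  simp [slAct, Matrix.toLpLin_apply, Matrix.mulVec_mulVec]

theorem h9_act_one (v : EuclideanSpace ℝ (Fin 2)) : slAct 1 v = v := by
  simp [slAct, Matrix.toLpLin_apply]

theorem h9_act_ne (X : SL2) (v : EuclideanSpace ℝ (Fin 2)) (hv : v ≠ 0) : slAct X v ≠ 0 := by
  intro h
  apply hv
  have h2 : slAct (X⁻¹ * X) v = slAct X⁻¹ (slAct X v) := h9_act_mul _ _ _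
  rw [h, inv_mul_cancel, h9_act_one] at h2
  rw [h2]
  simp [slAct]

theorem h9_cayley (X : SL2) (v : EuclideanSpace ℝ (Fin 2)) :
    slAct X (slAct X v) + v = (Matrix.trace (X : Matrix (Fin 2) (Fin 2) ℝ)) • slAct X v := by
  have hd : (X : Matrix (Fin 2) (Fin 2) ℝ).det = 1 := X.2
  rw [Matrix.det_fin_two] at hd
  ext i
  fin_cases i
  · simp [slAct, Matrix.toLpLin_apply, Matrix.mulVec, dotProduct, Fin.sum_univ_two,
      Matrix.trace_fin_two]
    linear_combination (-(v 0)) * hd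
  · simp [slAct, Matrix.toLpLin_apply, Matrix.mulVec, dotProduct, Fin.sum_univ_two,
      Matrix.trace_fin_two]
    linear_combination (-(v 1)) * hd

/-- product of `n` consecutive matrices starting at `s` -/
def h9P (M : ℤ → SL2) (s : ℤ) : ℕ → SL2
  | 0 => 1
  | n + 1 => M (s + n) * h9P M s n

theorem h9P_act (M : ℤ → SL2) (u : ℤ → EuclideanSpace ℝ (Fin 2))
    (hu : ∀ n, u (n + 1) = slAct (M n) (u n)) (s : ℤ) (n : ℕ) :
    u (s + n) = slAct (h9P M s n) (u s) := by
  induction n with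
  | zero => simp [h9P, h9_act_one]
  | succ n ih =>
    rw [h9P, h9_act_mul, ← ih, ← hu]
    congr 1
    push_cast
    ring

theorem h9P_shift (M : ℤ → SL2) (s : ℤ) (n : ℕ) :
    h9P M (s + 1) n * M s = M (s + n) * h9P M s n := by
  induction n with
  | zero => simp [h9P]
  | succ n ih =>
    rw [h9P, mul_assoc, ih, h9P]
    congr 2
    push_cast
    ring

theorem h9P_congr (M : ℤ → SL2) (s s' : ℤ) (n : ℕ) (h : ∀ i : ℕ, i < n → M (s + i) = M (s' + i)) :
    h9P M s n = h9P M s' n := by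
  induction n with
  | zero => rfl
  | succ n ih =>
    rw [h9P, h9P, h n (by omega), ih (fun i hi => h i (by omega))]

theorem h9_trace (M : ℤ → SL2) (a : ℤ) (p m : ℕ)
    (h : ∀ j : ℤ, a ≤ j → j < a + m → M (j + p) = M j) :
    Matrix.trace (h9P M (a + m) p : Matrix (Fin 2) (Fin 2) ℝ) =
      Matrix.trace (h9P M a p : Matrix (Fin 2) (Fin 2) ℝ) := by
  induction m with
  | zero => simp
  | succ m ih =>
    rw [← ih (fun j h1 h2 => h j h1 (by push_cast; omega))]
    have h1 := h9P_shift M (a + m) p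
    rw [h (a + m) (by omega) (by push_cast; omega)] at h1
    have h2 : h9P M (a + m + 1) p = M (a + m) * h9P M (a + m) p * (M (a + m))⁻¹ := by
      rw [← h1]; group
    have h3 : (a + ((m + 1 : ℕ) : ℤ)) = a + m + 1 := by push_cast; ring
    rw [h3, h2, Matrix.SpecialLinearGroup.coe_mul, Matrix.trace_mul_comm,
      ← Matrix.SpecialLinearGroup.coe_mul]
    rw [← mul_assoc, inv_mul_cancel, one_mul]

theorem h9_gordon (M : ℤ → SL2) (u : ℤ → EuclideanSpace ℝ (Fin 2))
    (hu : ∀ n, u (n + 1) = slAct (M n) (u n)) (a b : ℤ) (p : ℕ)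
    (h : ∀ j : ℤ, a ≤ j → j < b + p → M (j + p) = M j) :
    ∃ t : ℝ, ∀ s : ℤ, a ≤ s → s ≤ b → u (s + 2 * p) + u s = t • u (s + p) := by
  refine ⟨Matrix.trace (h9P M a p : Matrix (Fin 2) (Fin 2) ℝ), fun s h1 h2 => ?_⟩
  have ht := h9_trace M a p (s - a).toNat (fun j hj hj' => h j hj (by omega))
  rw [show a + ((s - a).toNat : ℤ) = s by omega] at ht
  rw [← ht, h9P_act M u hu s p, ← h9_cayley, ← h9P_act M u hu s p]
  congr 1
  rw [← h9P_congr M (s + p) s p, ← h9P_act M u hu (s + p) p]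
  · congr 1; ring
  · intro i hi
    rw [← h (s + i) (by omega) (by omega)]
    congr 1; ring

theorem h9_cocycleP_succ {𝒜 : Type*} (A : (ℤ → 𝒜) → SL2) (n : ℕ) (σ : ℤ → 𝒜) :
    cocycleP A (n + 1) σ = cocycleP A n (shift 1 σ) * A σ := by
  induction n with
  | zero =>
    have : shift (0 : ℤ) σ = σ := by funext i; simp [shift]
    simp [cocycleP, this]
  | succ n ih =>
    rw [cocycleP, ih, cocycleP, ← mul_assoc]
    congr 3
    funext i
    simp only [shift]
    congr 1
    push_cast
    ring

theorem h9_cocycle_succ {𝒜 : Type*} (A : (ℤ → 𝒜) → SL2) (n : ℤ) (ω : ℤ → 𝒜) :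
    cocycle A (n + 1) ω = A (shift n ω) * cocycle A n ω := by
  rcases le_or_gt 0 n with h | h
  · obtain ⟨m, rfl⟩ := Int.eq_ofNat_of_zero_le h
    unfold cocycle
    rw [if_pos h, if_pos (by omega)]
    simp only [show ((m : ℤ) + 1).toNat = m + 1 by omega, Int.toNat_natCast]
    rfl
  · obtain ⟨m, rfl⟩ : ∃ m : ℕ, n = -((m : ℤ) + 1) := ⟨(-n - 1).toNat, by omega⟩
    have e : cocycle A (-((m : ℤ) + 1)) ω =
        (cocycleP A (m + 1) (shift (-((m : ℤ) + 1)) ω))⁻¹ := by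
      unfold cocycle
      rw [if_neg (by omega)]
      congr 2
    have e2 : cocycle A (-((m : ℤ) + 1) + 1) ω = (cocycleP A m (shift (-(m : ℤ)) ω))⁻¹ := by
      rw [show -((m : ℤ) + 1) + 1 = -(m : ℤ) by ring]
      unfold cocycle
      split_ifs with h0
      · have : m = 0 := by omega
        subst this
        simp [cocycleP]
      · simp
    rw [e, e2, h9_cocycleP_succ, mul_inv_rev, mul_inv_cancel_left]
    congr 2
    funext i
    simp only [shift]
    congr 1
    ring

theorem h9_shift_mem {𝒜 : Type*} [TopologicalSpace 𝒜] {Ω : Set (ℤ → 𝒜)} (hΩ : IsSubshift Ω)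
    (ω : ℤ → 𝒜) (hω : ω ∈ Ω) (n : ℤ) : shift n ω ∈ Ω := by
  induction n using Int.induction_on with
  | zero =>
    have : shift (0 : ℤ) ω = ω := by funext i; simp [shift]
    rwa [this]
  | succ n ih =>
    convert hΩ.shift_mem _ ih using 1
    funext i; simp only [shift]; congr 1; ring
  | pred n ih =>
    convert hΩ.shift_neg_mem _ ih using 1
    funext i; simp only [shift]; congr 1; ring

theorem h9_occ {𝒜 : Type*} (x : List 𝒜) (ω : ℤ → 𝒜) (k : ℤ)
    (h : occursAt (x ++ x ++ x) ω k) (j : ℤ) (h1 : k ≤ j) (h2 : j < k + 2 * x.length) :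
    ω (j + x.length) = ω j := by
  obtain ⟨i, rfl⟩ : ∃ i : ℕ, j = k + i := ⟨(j - k).toNat, by omega⟩
  have key : ∀ i : ℕ, i < 3 * x.length → (x ++ x ++ x)[i]? = some (ω (k + i)) := by
    intro i hi
    unfold occursAt at h
    rw [h]
    have : i < (x ++ x ++ x).length := by simp; omega
    have e : word ω k (x ++ x ++ x).length =
        (List.range (x ++ x ++ x).length).map (fun i : ℕ => ω (k + (i : ℤ))) := by
      unfold word
      rw [show (do
          let a ← List.range (x ++ x ++ x).length
          pure (a : ℤ)) = (List.range (x ++ x ++ x).length).map (fun a : ℕ => (a : ℤ)) from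
          List.flatMap_pure_eq_map _ _, List.map_map]
      rfl
    rw [e, List.getElem?_map, List.getElem?_range this]
    rfl
  have a1 := key i (by omega)
  have a2 := key (i + x.length) (by omega)
  have a3 : (x ++ x ++ x)[i + x.length]? = (x ++ x ++ x)[i]? := by
    rw [List.append_assoc, List.getElem?_append_right (by omega), Nat.add_sub_cancel,
      ← List.append_assoc,
      List.getElem?_append_left (l₁ := x ++ x) (l₂ := x) (by simp; omega)]
  rw [a1, a2] at a3
  have := Option.some.inj a3
  rw [← this]
  congr 1
  push_cast
  ring

theorem h9_decay (f : ℕ → ℝ) (hf : ∀ n, 0 ≤ f n)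
    (h : limsup (fun n : ℕ => Real.log (f n) / n) atTop < 0) : Tendsto f atTop (𝓝 0) := by
  rw [limsup_eq] at h
  have hne : {a : ℝ | ∀ᶠ n : ℕ in atTop, Real.log (f n) / n ≤ a}.Nonempty := by
    by_contra hc
    rw [Set.not_nonempty_iff_eq_empty] at hc
    rw [hc, Real.sInf_empty] at h
    exact lt_irrefl _ h
  obtain ⟨a, ha, ha0⟩ := exists_lt_of_csInf_lt hne h
  have ht : Tendsto (fun n : ℕ => Real.exp (a * n)) atTop (𝓝 0) :=
    Real.tendsto_exp_atBot.comp
      (tendsto_natCast_atTop_atTop.const_mul_atTop_of_neg ha0)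
  refine squeeze_zero' (Eventually.of_forall hf) ?_ ht
  have ha' : ∀ᶠ n : ℕ in atTop, Real.log (f n) / n ≤ a := ha
  filter_upwards [ha', eventually_gt_atTop 0] with n hn hn0
  rcases (hf n).eq_or_lt with h0 | h0
  · rw [← h0]; positivity
  · rw [← Real.log_le_iff_le_exp h0]
    rwa [div_le_iff₀ (by exact_mod_cast hn0)] at hn

theorem h9_small (x y z x' y' z' : EuclideanSpace ℝ (Fin 2)) (t : ℝ)
    (e1 : x + y = t • z) (e2 : x' + z' = t • y') (h1 : ‖x‖ + ‖z‖ < ‖y‖)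
    (h2 : ‖x'‖ + ‖z'‖ < ‖y'‖) : False := by
  have n2 : |t| * ‖y'‖ ≤ ‖x'‖ + ‖z'‖ := by
    rw [← Real.norm_eq_abs, ← norm_smul, ← e2]; exact norm_add_le _ _
  have n1 : ‖y‖ ≤ |t| * ‖z‖ + ‖x‖ := by
    have e3 : y = t • z - x := by rw [← e1]; abel
    rw [← Real.norm_eq_abs, ← norm_smul, e3]
    exact norm_sub_le _ _
  rcases le_or_gt |t| 1 with h | h
  · nlinarith [norm_nonneg z]
  · nlinarith [norm_nonneg y']

theorem h9_main {𝒜 : Type*} [TopologicalSpace 𝒜]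
    {Ω : Set (ℤ → 𝒜)} (hΩ : IsSubshift Ω) (ω : ℤ → 𝒜) (hω : ω ∈ Ω)
    (w : ℕ → List 𝒜) (hlen : Filter.Tendsto (fun k => (w k).length) Filter.atTop Filter.atTop)
    (hocc : ∀ k, occursAt (w k ++ w k ++ w k) ω (-((w k).length : ℤ)) ∨
      occursAt (w k ++ w k ++ w k) ω (-(2 * ((w k).length : ℤ))))
    (A : (ℤ → 𝒜) → SL2) (hA : LocConstOn Ω A)
    (v : EuclideanSpace ℝ (Fin 2)) (hv : v ≠ 0)
    (hp : Tendsto (fun n : ℕ => ‖slAct (cocycle A n ω) v‖) atTop (𝓝 0))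
    (hm : Tendsto (fun n : ℕ => ‖slAct (cocycle A (-(n : ℤ)) ω) v‖) atTop (𝓝 0)) : False := by
  obtain ⟨N, hN⟩ := hA
  set u : ℤ → EuclideanSpace ℝ (Fin 2) := fun n => slAct (cocycle A n ω) v with hu_def
  set M : ℤ → SL2 := fun n => A (shift n ω) with hM_def
  have hu : ∀ n, u (n + 1) = slAct (M n) (u n) := fun n => by
    simp only [hu_def, hM_def, h9_cocycle_succ, h9_act_mul]
  have hpos : ∀ n, 0 < ‖u n‖ := fun n => norm_pos_iff.mpr (h9_act_ne _ _ hv)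
  obtain ⟨ε, hε, hε1, hε2⟩ : ∃ ε : ℝ, 0 < ε ∧ 2 * ε ≤ ‖u N‖ ∧ 2 * ε ≤ ‖u (-N)‖ :=
    ⟨min ‖u N‖ ‖u (-N)‖ / 2, by have := lt_min (hpos N) (hpos (-N)); linarith,
      by have := min_le_left ‖u N‖ ‖u (-N)‖; linarith,
      by have := min_le_right ‖u N‖ ‖u (-N)‖; linarith⟩
  obtain ⟨K1, hK1⟩ := eventually_atTop.mp (hp.eventually (gt_mem_nhds hε))
  obtain ⟨K2, hK2⟩ := eventually_atTop.mp (hm.eventually (gt_mem_nhds hε))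
  have hP : ∀ n : ℤ, (K1 : ℤ) ≤ n → ‖u n‖ < ε := fun n hn => by
    have := hK1 n.toNat (by omega)
    rwa [Int.toNat_of_nonneg (by omega)] at this
  have hQ : ∀ n : ℤ, n ≤ -(K2 : ℤ) → ‖u n‖ < ε := fun n hn => by
    have := hK2 (-n).toNat (by omega)
    rwa [Int.toNat_of_nonneg (by omega), neg_neg] at this
  obtain ⟨k, hk⟩ := (hlen.eventually (eventually_ge_atTop (K1 + K2 + 2 * N))).exists
  have hper : ∀ c : ℤ, occursAt (w k ++ w k ++ w k) ω c → ∀ j : ℤ, c + N ≤ j →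
      j < c + 2 * (w k).length - N → M (j + (w k).length) = M j := by
    intro c hc j h1 h2
    refine hN _ (h9_shift_mem hΩ ω hω _) _ (h9_shift_mem hΩ ω hω _) (fun i hi => ?_)
    rw [abs_le] at hi
    simp only [shift]
    rw [← add_assoc]
    exact h9_occ _ _ _ hc _ (by omega) (by omega)
  have hock := hocc k
  clear hocc hlen
  generalize (w k).length = p at hk hper hock
  rcases hock with hc | hc
  · obtain ⟨t, ht⟩ := h9_gordon M u hu (-p + N) (-N) p
      (fun j h1 h2 => hper _ hc j h1 (by omega))
    have e1 := ht (-N) (by omega) (by omega)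
    have e2 := ht (-p + N) (by omega) (by omega)
    rw [show -(p : ℤ) + N + p = N by ring] at e2
    refine h9_small _ _ _ _ _ _ t e1 e2 ?_ ?_
    · linarith [hP (-N + 2 * p) (by omega), hP (-N + p) (by omega)]
    · linarith [hP (-p + N + 2 * p) (by omega), hQ (-p + N) (by omega)]
  · obtain ⟨t, ht⟩ := h9_gordon M u hu (-(2 * p) + N) (-p - N) p
      (fun j h1 h2 => hper _ hc j h1 (by omega))
    have e1 := ht (-(2 * p) + N) (by omega) (by omega)
    have e2 := ht (-p - N) (by omega) (by omega)
    rw [show -(2 * (p : ℤ)) + N + 2 * p = N by ring, add_comm (u _) (u _)] at e1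
    rw [show -(p : ℤ) - N + p = -N by ring] at e2
    refine h9_small _ _ _ _ _ _ t e1 e2 ?_ ?_
    · linarith [hQ (-(2 * p) + N) (by omega), hQ (-(2 * p) + N + p) (by omega)]
    · linarith [hP (-p - N + 2 * p) (by omega), hQ (-p - N) (by omega)]

end helpers9

/-- **Gordon-type argument.** If `ω` begins with cubes `w_k w_k w_k`
around the origin for words of unbounded length, then for any locally constant cocycle
no nonzero vector decays in both time directions; in particular at most one of the two
one-sided exponents is negative. -/
theorem statement9 {𝒜 : Type*} [Fintype 𝒜] [TopologicalSpace 𝒜] [DiscreteTopology 𝒜]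
    {Ω : Set (ℤ → 𝒜)} (hΩ : IsSubshift Ω) (ω : ℤ → 𝒜) (hω : ω ∈ Ω)
    (w : ℕ → List 𝒜) (hlen : Filter.Tendsto (fun k => (w k).length) Filter.atTop Filter.atTop)
    (hocc : ∀ k, occursAt (w k ++ w k ++ w k) ω (-((w k).length : ℤ)) ∨
      occursAt (w k ++ w k ++ w k) ω (-(2 * ((w k).length : ℤ))))
    (A : (ℤ → 𝒜) → SL2) (hA : LocConstOn Ω A)
    (v : EuclideanSpace ℝ (Fin 2)) (hv : v ≠ 0) :
    (¬ (Filter.Tendsto (fun n : ℕ => ‖slAct (cocycle A n ω) v‖) Filter.atTop (nhds 0) ∧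
        Filter.Tendsto (fun n : ℕ => ‖slAct (cocycle A (-(n : ℤ)) ω) v‖) Filter.atTop (nhds 0))) ∧
    ¬ (Filter.limsup (fun n : ℕ => Real.log ‖slAct (cocycle A n ω) v‖ / n) Filter.atTop < 0 ∧
       Filter.limsup (fun n : ℕ => Real.log ‖slAct (cocycle A (-(n : ℤ)) ω) v‖ / n)
         Filter.atTop < 0) := by
  have key := h9_main hΩ ω hω w hlen hocc A hA v hv
  refine ⟨fun h => key h.1 h.2, fun h => key ?_ ?_⟩
  · exact h9_decay _ (fun _ => norm_nonneg _) h.1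
  · exact h9_decay _ (fun _ => norm_nonneg _) h.2
end

section
/- For every B ∈ SL(2,ℝ) and every v ∈ ℝ², max{ ‖B^{−1}v‖, ‖Bv‖, ‖B²v‖ } ≥ ‖v‖/2, where ‖·‖ is the Euclidean norm on ℝ². -/
open Filter Topology MeasureTheory

theorem slAct_add_inv (B : SL2) (v : EuclideanSpace ℝ (Fin 2)) :
    slAct B v + slAct B⁻¹ v = (B.1 0 0 + B.1 1 1) • v := by
  ext i
  fin_cases i <;>
    simp [slAct, Matrix.SpecialLinearGroup.coe_inv, Matrix.adjugate_fin_two, Matrix.mulVec,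
      dotProduct, Fin.sum_univ_two] <;> ring

theorem slAct_sq_add (B : SL2) (v : EuclideanSpace ℝ (Fin 2)) :
    v = (B.1 0 0 + B.1 1 1) • slAct B v - slAct (B ^ 2) v := by
  have h : B.1 0 0 * B.1 1 1 - B.1 0 1 * B.1 1 0 = 1 := by
    rw [← Matrix.det_fin_two]; exact B.2
  ext i
  fin_cases i
  · simp [slAct, pow_two, Matrix.mulVec, Matrix.mul_apply, dotProduct, Fin.sum_univ_two]
    linear_combination (-(v 0)) * h
  · simp [slAct, pow_two, Matrix.mulVec, Matrix.mul_apply, dotProduct, Fin.sum_univ_two]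
    linear_combination (-(v 1)) * h

/-- For `B ∈ SL(2,ℝ)` and `v ∈ ℝ²`,
`max{‖B⁻¹v‖, ‖Bv‖, ‖B²v‖} ≥ ‖v‖/2`. -/
theorem statement10 (B : SL2) (v : EuclideanSpace ℝ (Fin 2)) :
    ‖v‖ / 2 ≤ max (max ‖slAct B⁻¹ v‖ ‖slAct B v‖) ‖slAct (B ^ 2) v‖ := by
  have h1 := slAct_add_inv B v
  have h2 := slAct_sq_add B v
  set t : ℝ := B.1 0 0 + B.1 1 1
  have m1 : ‖slAct B⁻¹ v‖ ≤ max (max ‖slAct B⁻¹ v‖ ‖slAct B v‖) ‖slAct (B ^ 2) v‖ :=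
    (le_max_left _ _).trans (le_max_left _ _)
  have m2 : ‖slAct B v‖ ≤ max (max ‖slAct B⁻¹ v‖ ‖slAct B v‖) ‖slAct (B ^ 2) v‖ :=
    (le_max_right _ _).trans (le_max_left _ _)
  have m3 : ‖slAct (B ^ 2) v‖ ≤ max (max ‖slAct B⁻¹ v‖ ‖slAct B v‖) ‖slAct (B ^ 2) v‖ :=
    le_max_right _ _
  rcases le_total |t| 1 with ht | ht
  · have h3 : ‖v‖ ≤ |t| * ‖slAct B v‖ + ‖slAct (B ^ 2) v‖ := by
      have h4 := norm_sub_le (t • slAct B v) (slAct (B ^ 2) v)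
      rw [← h2, norm_smul, Real.norm_eq_abs] at h4
      exact h4
    have h5 := mul_le_mul_of_nonneg_right ht (norm_nonneg (slAct B v))
    linarith
  · have h4 := norm_add_le (slAct B v) (slAct B⁻¹ v)
    rw [h1, norm_smul, Real.norm_eq_abs] at h4
    have h5 := mul_le_mul_of_nonneg_right ht (norm_nonneg v)
    linarith
end
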